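/- arXiv:2111.03247 — 6 statements merged into one kernel-verified Lean document; each statement's English description precedes it below -/
import Mathlib

section
/- For every δ ∈ (0,1) there exists c > 0 (depending only on δ) such that the following holds. Let G = (V,E) be a finite simple graph on n vertices with maximum degree at most Δ, where Δ ≥ 3 is an integer, let λ ∈ (0, (1−δ)·λ_Δ], and let μ be the hardcore model on G with uniform fugacity λ. Let κ > 0 and let f : 2^V → ℝ satisfy |f(σ ∪ {v}) − f(σ)| ≤ κ for every σ ⊆ V and v ∉ σ (i.e., f is κ-Lipschitz with respect to the Hamming metric). Then for all t ≥ 0, P_μ( f − E_μ[f] > t ) ≤ exp(−c·t²/(κ²·n)). -/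
/-!
Reveal the vertices one at a time and apply the Azuma–Hoeffding method. Revealing `u` when `S` is
the set of other vertices not yet decided moves the conditional mean of `f` by at most the gap
between its means given `u` occupied and given `u` vacant, so a bound `κ * C(δ)` on this gap,
uniform in `S` and `u`, suffices (`gap_le`, `mgf_le`).

Vacating `u` leaves the hardcore model on `S`; occupying `u` leaves the one on `S` minus the
neighbours `u₁, …, u_k` of `u`, up to a change of `f` by `κ`. Deleting the `u_i` successively,
the deletion of `u_i` changes the mean of `f` by `p_i` times the gap at `u_i` in the smaller graph,
where `p_i` is the occupation probability of `u_i` there. Hence `gap(u) ≤ κ + ∑ p_i gap(u_i)`,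
while `p(u) = x / (1 + x)` with `x = λ ∏ (1 - p_i)`: this is the recursion on Weitz's tree of
self-avoiding walks (`exists_probs`).

The recursion contracts for the potential `√p`: with at most `d = Δ - 1` children,
`√p(u) * ∑ √p_i ≤ √(1 - δ/5)` (`contraction`), by Cauchy–Schwarz, AM–GM and a one-variable
maximisation which is tight exactly at `λ_Δ`. So `√p(u) * gap(u) = O(κ √λ / δ)` below the root
(`sqrt_prob_mul_gap_le`), and since `Δ λ ≤ 12` one more step of the recursion bounds the gap at the
root, which may have `Δ` children, by `κ (1 + 120/δ)`.
-/

open Finset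

noncomputable section
attribute [local instance] Classical.propDecidable

variable {V : Type*} [Fintype V] [DecidableEq V]

/-- `σ` is an independent set of `G`: no two of its elements are adjacent. -/
def IndepSet (G : SimpleGraph V) (σ : Finset V) : Prop :=
  ∀ u ∈ σ, ∀ w ∈ σ, ¬ G.Adj u w

/-- Unnormalized hardcore weight of `σ`: `∏_{v ∈ σ} λ_v` if `σ` is independent, else `0`. -/
def hcWeight (G : SimpleGraph V) (lam : V → ℝ) (σ : Finset V) : ℝ :=
  if IndepSet G σ then ∏ v ∈ σ, lam v else 0

/-- The hardcore model on `G` with fugacities `lam`, as a distribution on `Finset V`. -/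
def hardcore (G : SimpleGraph V) (lam : V → ℝ) (σ : Finset V) : ℝ :=
  hcWeight G lam σ / ∑ τ : Finset V, hcWeight G lam τ

/-- The tree-uniqueness threshold `λ_Δ = (Δ−1)^{Δ−1}/(Δ−2)^Δ`. -/
def hcCrit (Δ : ℕ) : ℝ := ((Δ : ℝ) - 1) ^ (Δ - 1) / ((Δ : ℝ) - 2) ^ Δ

/-- Mean of `f` under a distribution `μ` on a finite set. -/
def expect {Ω : Type*} [Fintype Ω] (μ : Ω → ℝ) (f : Ω → ℝ) : ℝ :=
  ∑ x, μ x * f x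

/-! ### One-variable inequalities -/

/-- `(1 + 1/m)^(m+1) ≤ 4` for `m = d - 1 ≥ 1`, by Bernoulli's inequality with exponent `d / 2`. -/
lemma pow_self_le {d : ℕ} (hd : 2 ≤ d) : (d : ℝ) ^ d ≤ 4 * ((d : ℝ) - 1) ^ d := by
  have hd' : (2 : ℝ) ≤ d := by exact_mod_cast hd
  have hd0 : (0 : ℝ) < d := by linarith
  have h1 : -1 ≤ -(1 / (d : ℝ)) := by
    rw [neg_le_neg_iff, div_le_one hd0]; linarith
  have hb := one_add_mul_self_le_rpow_one_add h1 (p := (d : ℝ) / 2) (by linarith)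
  have hb2 : (1 / 2 : ℝ) ≤ (1 + -(1 / (d : ℝ))) ^ ((d : ℝ) / 2) := by
    refine le_trans (le_of_eq ?_) hb
    field_simp
    norm_num
  have hnn : (0 : ℝ) ≤ 1 + -(1 / (d : ℝ)) := by linarith
  have hsq : ((1 + -(1 / (d : ℝ))) ^ ((d : ℝ) / 2)) ^ 2 = (1 + -(1 / (d : ℝ))) ^ d := by
    rw [← Real.rpow_natCast, ← Real.rpow_mul hnn, ← Real.rpow_natCast _ d]
    congr 1
    push_cast
    ring
  have h4 : (1 / 4 : ℝ) ≤ (1 + -(1 / (d : ℝ))) ^ d := by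
    rw [← hsq]; nlinarith
  have he : (1 + -(1 / (d : ℝ))) ^ d = ((d : ℝ) - 1) ^ d / (d : ℝ) ^ d := by
    rw [← div_pow]; congr 1; field_simp; ring
  rw [he, le_div_iff₀ (by positivity)] at h4
  linarith

lemma hcCrit_succ (d : ℕ) : hcCrit (d + 1) = (d : ℝ) ^ d / ((d : ℝ) - 1) ^ (d + 1) := by
  unfold hcCrit
  push_cast
  rw [show ((d : ℝ) + 1 - 1) = d by ring, show ((d : ℝ) + 1 - 2) = d - 1 by ring]

lemma hcCrit_succ_mul_le {d : ℕ} (hd : 2 ≤ d) : hcCrit (d + 1) * ((d : ℝ) - 1) ≤ 4 := by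
  have hd' : (2 : ℝ) ≤ d := by exact_mod_cast hd
  have hm : (0 : ℝ) < (d : ℝ) - 1 := by linarith
  rw [hcCrit_succ, pow_succ, ← div_div, div_mul_cancel₀ _ hm.ne', div_le_iff₀ (by positivity)]
  exact pow_self_le hd

lemma hcCrit_pos {d : ℕ} (hd : 2 ≤ d) : 0 < hcCrit (d + 1) := by
  have hd' : (2 : ℝ) ≤ d := by exact_mod_cast hd
  have hm : (0 : ℝ) < (d : ℝ) - 1 := by linarith
  rw [hcCrit_succ]
  positivity

lemma succ_mul_pow_sub_le (d : ℕ) {y : ℝ} (hy : 0 ≤ y) :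
    ((d : ℝ) + 1) * y ^ d - d * y ^ (d + 1) ≤ 1 := by
  induction d with
  | zero => simp
  | succ d ih =>
    have h1 : (1 - y) * (y ^ (d + 1) - 1) ≤ 0 := by
      rcases le_total y 1 with h | h
      · exact mul_nonpos_of_nonneg_of_nonpos (by linarith)
          (by linarith [pow_le_one₀ (n := d + 1) hy h])
      · exact mul_nonpos_of_nonpos_of_nonneg (by linarith)
          (by linarith [one_le_pow₀ (n := d + 1) h])
    have h2 := mul_le_mul_of_nonneg_left ih hy
    push_cast
    have e : ((d : ℝ) + 1 + 1) * y ^ (d + 1) - (d + 1) * y ^ (d + 1 + 1)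
        = y * (((d : ℝ) + 1) * y ^ d - d * y ^ (d + 1)) + (y ^ (d + 1) - y ^ (d + 1) * y) := by
      ring
    rw [e]
    nlinarith

/-- The maximum over `q` is attained at `q = (d - 1) / d`, the tree fixed point at criticality. -/
lemma crit_bound {d : ℕ} (hd : 2 ≤ d) {q : ℝ} (hq : 0 ≤ q) :
    hcCrit (d + 1) * q ^ d * ((d : ℝ) ^ 2 * (1 - q) - 1) ≤ 1 := by
  have hd' : (2 : ℝ) ≤ d := by exact_mod_cast hd
  have hd0 : (0 : ℝ) < d := by linarith
  have hm : (0 : ℝ) < (d : ℝ) - 1 := by linarith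
  set y : ℝ := q * d / ((d : ℝ) - 1) with hy
  have hqy : q = y * ((d : ℝ) - 1) / d := by rw [hy]; field_simp
  have hy0 : 0 ≤ y := by positivity
  have := succ_mul_pow_sub_le d hy0
  refine le_trans (le_of_eq ?_) this
  rw [hcCrit_succ, hqy, div_pow, mul_pow]
  have hdd : (d : ℝ) ^ d ≠ 0 := by positivity
  have hmm : ((d : ℝ) - 1) ^ d ≠ 0 := by positivity
  have hm' := hm.ne'
  have hd'' := hd0.ne'
  rw [pow_succ, pow_succ]
  field_simp
  ring

/-- Uniform AM–GM, with the missing `d - #T` factors taken to be `1`. -/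
lemma prod_one_sub_le {ι : Type*} (T : Finset ι) (p : ι → ℝ) {d : ℕ} (hT : #T ≤ d)
    (hp : ∀ i ∈ T, p i < 1) (hS : 0 < 1 - (∑ i ∈ T, p i) / d) (hd : 0 < d) :
    ∏ i ∈ T, (1 - p i) ≤ (1 - (∑ i ∈ T, p i) / d) ^ d := by
  set q := 1 - (∑ i ∈ T, p i) / d with hq
  have hd0 : (0 : ℝ) < d := by exact_mod_cast hd
  have hSq : ∑ i ∈ T, p i = d * (1 - q) := by rw [hq]; field_simp; ring
  have h1 : ∀ x : ℝ, x ≤ q * Real.exp (x / q - 1) := by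
    intro x
    have := Real.add_one_le_exp (x / q - 1)
    calc x = q * (x / q - 1 + 1) := by field_simp; ring
      _ ≤ _ := mul_le_mul_of_nonneg_left this hS.le
  calc ∏ i ∈ T, (1 - p i) ≤ ∏ i ∈ T, (q * Real.exp ((1 - p i) / q - 1)) :=
        Finset.prod_le_prod (fun i hi => by linarith [hp i hi]) (fun i _ => h1 _)
    _ ≤ (∏ i ∈ T, (q * Real.exp ((1 - p i) / q - 1)))
          * (q * Real.exp (1 / q - 1)) ^ (d - #T) :=
        le_mul_of_one_le_right (Finset.prod_nonneg fun i _ => by positivity)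
          (one_le_pow₀ (h1 1))
    _ = q ^ d := by
        rw [Finset.prod_mul_distrib, Finset.prod_const, mul_pow, ← Real.exp_sum,
          ← Real.exp_nat_mul, mul_mul_mul_comm, ← pow_add, ← Real.exp_add,
          Nat.add_sub_cancel' hT]
        have : ∑ i ∈ T, ((1 - p i) / q - 1) + ((d - #T : ℕ) : ℝ) * (1 / q - 1) = 0 := by
          rw [Finset.sum_sub_distrib, ← Finset.sum_div, Finset.sum_sub_distrib, hSq,
            Nat.cast_sub hT]
          simp only [sum_const, nsmul_eq_mul, mul_one]
          field_simp
          ring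
        rw [this, Real.exp_zero, mul_one]

/-- Contraction of the tree recursion `p = x / (1 + x)`, `x = λ ∏ (1 - p i)`, for the potential
`√p`, with a rate that does not depend on the degree. -/
lemma contraction {ι : Type*} (T : Finset ι) (p : ι → ℝ) {d : ℕ} (hd : 2 ≤ d) (hT : #T ≤ d)
    (hp0 : ∀ i ∈ T, 0 ≤ p i) (hp1 : ∀ i ∈ T, p i < 1) {lam δ : ℝ} (hδ : 0 < δ) (hl : 0 < lam)
    (hl' : lam ≤ (1 - δ) * hcCrit (d + 1)) {x : ℝ} (hx : x = lam * ∏ i ∈ T, (1 - p i)) :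
    x / (1 + x) * (∑ i ∈ T, √(p i)) ^ 2 ≤ 1 - δ / 5 := by
  have hd' : (2 : ℝ) ≤ d := by exact_mod_cast hd
  have hd0 : (0 : ℝ) < d := by linarith
  have hTd : (#T : ℝ) ≤ d := by exact_mod_cast hT
  have hcp := hcCrit_pos hd
  have hS0 : 0 ≤ ∑ i ∈ T, p i := Finset.sum_nonneg hp0
  have hSd : ∑ i ∈ T, p i < d := by
    rcases T.eq_empty_or_nonempty with rfl | hne
    · simpa using hd0
    · have := Finset.sum_lt_sum_of_nonempty hne hp1
      simp only [sum_const, nsmul_eq_mul, mul_one] at this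
      linarith
  set q := 1 - (∑ i ∈ T, p i) / d with hq
  have hq0 : 0 < q := by
    rw [hq, sub_pos, div_lt_one hd0]; exact hSd
  have hq1 : q ≤ 1 := by
    have : 0 ≤ (∑ i ∈ T, p i) / d := by positivity
    linarith
  have hCS : (∑ i ∈ T, √(p i)) ^ 2 ≤ (d : ℝ) ^ 2 * (1 - q) := by
    calc (∑ i ∈ T, √(p i)) ^ 2 ≤ #T * ∑ i ∈ T, √(p i) ^ 2 := sq_sum_le_card_mul_sum_sq
      _ = #T * ∑ i ∈ T, p i := by
          congr 1
          exact Finset.sum_congr rfl fun i hi => Real.sq_sqrt (hp0 i hi)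
      _ ≤ d * ∑ i ∈ T, p i := by gcongr
      _ = (d : ℝ) ^ 2 * (1 - q) := by rw [hq]; field_simp; ring
  set X := lam * q ^ d with hX
  have hx0 : 0 ≤ x := by
    rw [hx]
    exact mul_nonneg hl.le (Finset.prod_nonneg fun i hi => by linarith [hp1 i hi])
  have hxX : x ≤ X := by
    rw [hx, hX]
    exact mul_le_mul_of_nonneg_left (prod_one_sub_le T p hT hp1 hq0 (by omega)) hl.le
  have hX0 : 0 < X := by positivity
  have hcrit4 : hcCrit (d + 1) ≤ 4 := by nlinarith [hcCrit_succ_mul_le hd]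
  have hδ1 : 0 < 1 - δ := by
    by_contra hcon
    have : (1 - δ) * hcCrit (d + 1) ≤ 0 :=
      mul_nonpos_of_nonpos_of_nonneg (by linarith) hcp.le
    linarith
  have hlam4 : lam ≤ 4 := by nlinarith
  have hX4 : X ≤ 4 := by
    have : q ^ d ≤ 1 := pow_le_one₀ hq0.le hq1
    have : lam * q ^ d ≤ lam * 1 := mul_le_mul_of_nonneg_left this hl.le
    linarith
  have hkey : X * ((d : ℝ) ^ 2 * (1 - q) - 1) ≤ 1 - δ := by
    rcases le_total ((d : ℝ) ^ 2 * (1 - q) - 1) 0 with h | h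
    · have := mul_nonpos_of_nonneg_of_nonpos hX0.le h
      linarith
    · calc X * ((d : ℝ) ^ 2 * (1 - q) - 1)
          ≤ ((1 - δ) * hcCrit (d + 1) * q ^ d) * ((d : ℝ) ^ 2 * (1 - q) - 1) := by
            rw [hX]; gcongr
        _ = (1 - δ) * (hcCrit (d + 1) * q ^ d * ((d : ℝ) ^ 2 * (1 - q) - 1)) := by ring
        _ ≤ (1 - δ) * 1 := mul_le_mul_of_nonneg_left (crit_bound hd hq0.le) hδ1.le
        _ = 1 - δ := by ring
  have hmono : x / (1 + x) ≤ X / (1 + X) := by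
    rw [div_le_div_iff₀ (by linarith) (by linarith)]; nlinarith
  calc x / (1 + x) * (∑ i ∈ T, √(p i)) ^ 2 ≤ X / (1 + X) * ((d : ℝ) ^ 2 * (1 - q)) := by
        gcongr
    _ ≤ 1 - δ / 5 := by
        rw [div_mul_eq_mul_div, div_le_iff₀ (by linarith)]
        nlinarith

lemma exp_le_add_exp_sq (x : ℝ) : Real.exp x ≤ x + Real.exp (x ^ 2) := by
  have h1 := Real.add_one_le_exp (x ^ 2)
  rcases le_total |x| 1 with h | h
  · have := (abs_le.mp (Real.abs_exp_sub_one_sub_id_le h)).2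
    linarith
  · rcases le_total 0 x with h0 | h0
    · rw [abs_of_nonneg h0] at h
      have : Real.exp x ≤ Real.exp (x ^ 2) := Real.exp_le_exp.mpr (by nlinarith)
      linarith
    · rw [abs_of_nonpos h0] at h
      have : Real.exp x ≤ 1 := Real.exp_le_one_iff.mpr h0
      nlinarith

/-- Hoeffding's lemma (with a non-optimal constant) for a two-point distribution. -/
lemma two_point_mgf {p a b s D : ℝ} (hp0 : 0 ≤ p) (hp1 : p ≤ 1) (hab : |b - a| ≤ D) :
    (1 - p) * Real.exp (s * a) + p * Real.exp (s * b)
      ≤ Real.exp (s * ((1 - p) * a + p * b) + s ^ 2 * D ^ 2) := by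
  set m := (1 - p) * a + p * b with hm
  have hsq : (b - a) ^ 2 ≤ D ^ 2 := by
    rw [← sq_abs]; exact pow_le_pow_left₀ (abs_nonneg _) hab 2
  have key : ∀ z : ℝ, (z - m) ^ 2 ≤ (b - a) ^ 2 →
      Real.exp (s * z) ≤ Real.exp (s * m) * (s * (z - m) + Real.exp (s ^ 2 * D ^ 2)) := by
    intro z hz
    have h1 := exp_le_add_exp_sq (s * (z - m))
    have h2 : Real.exp ((s * (z - m)) ^ 2) ≤ Real.exp (s ^ 2 * D ^ 2) := by
      apply Real.exp_le_exp.mpr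
      rw [mul_pow]
      exact mul_le_mul_of_nonneg_left (hz.trans hsq) (sq_nonneg s)
    calc Real.exp (s * z) = Real.exp (s * m) * Real.exp (s * (z - m)) := by
          rw [← Real.exp_add]; congr 1; ring
      _ ≤ _ := mul_le_mul_of_nonneg_left (by linarith) (Real.exp_pos _).le
  have ha := key a (by
    have : (a - m) ^ 2 = p ^ 2 * (b - a) ^ 2 := by rw [hm]; ring
    rw [this]
    exact mul_le_of_le_one_left (sq_nonneg _) (pow_le_one₀ hp0 hp1))
  have hb := key b (by
    have : (b - m) ^ 2 = (1 - p) ^ 2 * (b - a) ^ 2 := by rw [hm]; ring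
    rw [this]
    exact mul_le_of_le_one_left (sq_nonneg _) (pow_le_one₀ (by linarith) (by linarith)))
  calc (1 - p) * Real.exp (s * a) + p * Real.exp (s * b)
      ≤ (1 - p) * (Real.exp (s * m) * (s * (a - m) + Real.exp (s ^ 2 * D ^ 2)))
        + p * (Real.exp (s * m) * (s * (b - m) + Real.exp (s ^ 2 * D ^ 2))) :=
        add_le_add (mul_le_mul_of_nonneg_left ha (by linarith))
          (mul_le_mul_of_nonneg_left hb hp0)
    _ = Real.exp (s * m) * Real.exp (s ^ 2 * D ^ 2) := by rw [hm]; ring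
    _ = _ := by rw [← Real.exp_add]

/-! ### The hardcore model on induced subgraphs -/

/-- The vertices of `S` not adjacent to `u`. -/
def nonNbrs (G : SimpleGraph V) (S : Finset V) (u : V) : Finset V := S.filter fun w => ¬ G.Adj u w

/-- Unnormalized mean of `f` for the hardcore model on the subgraph induced by `S`. -/
def hcSum (G : SimpleGraph V) (lam : ℝ) (S : Finset V) (f : Finset V → ℝ) : ℝ :=
  ∑ σ ∈ S.powerset, hcWeight G (fun _ => lam) σ * f σ

/-- Partition function of the hardcore model on the subgraph induced by `S`. -/
def hcZ (G : SimpleGraph V) (lam : ℝ) (S : Finset V) : ℝ := hcSum G lam S fun _ => 1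

/-- Mean of `f` for the hardcore model on the subgraph induced by `S`. -/
def hcMean (G : SimpleGraph V) (lam : ℝ) (S : Finset V) (f : Finset V → ℝ) : ℝ :=
  hcSum G lam S f / hcZ G lam S

/-- For `u ∉ S`, the probability that `u` is occupied in the hardcore model on the subgraph induced
by `insert u S`. -/
def hcProb (G : SimpleGraph V) (lam : ℝ) (S : Finset V) (u : V) : ℝ :=
  lam * hcZ G lam (nonNbrs G S u) / (hcZ G lam S + lam * hcZ G lam (nonNbrs G S u))

/-- For `u ∉ S`, the absolute difference of the means of `f` on `insert u S` given that `u` is occupied and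
given that it is vacant. -/
def hcGap (G : SimpleGraph V) (lam : ℝ) (S : Finset V) (u : V) (f : Finset V → ℝ) : ℝ :=
  |hcMean G lam (nonNbrs G S u) (fun σ => f (insert u σ)) - hcMean G lam S f|

/-- `κ`-Lipschitz functions for the Hamming metric. -/
def HamLip (κ : ℝ) (f : Finset V → ℝ) : Prop :=
  ∀ (σ : Finset V) (v : V), v ∉ σ → |f (insert v σ) - f σ| ≤ κ

section Model

set_option linter.unusedSectionVars false

variable (G : SimpleGraph V) {lam : ℝ}

lemma HamLip.insert {κ : ℝ} (hκ : 0 ≤ κ) {f : Finset V → ℝ} (hf : HamLip κ f) (u : V) :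
    HamLip κ (fun σ => f (Insert.insert u σ)) := by
  intro σ v hv
  by_cases hvu : v = u
  · subst hvu; simpa using hκ
  · simp only [Finset.insert_comm u v]
    exact hf _ _ (by simp [hvu, hv])

lemma hcWeight_nonneg (hl : 0 < lam) (σ : Finset V) : 0 ≤ hcWeight G (fun _ => lam) σ := by
  unfold hcWeight; split_ifs <;> positivity

lemma hcWeight_insert {σ : Finset V} {u : V} (hu : u ∉ σ) :
    hcWeight G (fun _ => lam) (insert u σ)
      = if ∀ w ∈ σ, ¬ G.Adj u w then lam * hcWeight G (fun _ => lam) σ else 0 := by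
  unfold hcWeight
  have : IndepSet G (insert u σ) ↔ (∀ w ∈ σ, ¬ G.Adj u w) ∧ IndepSet G σ := by
    unfold IndepSet
    constructor
    · intro h
      exact ⟨fun w hw => h u (by simp) w (by simp [hw]),
        fun a ha b hb => h a (by simp [ha]) b (by simp [hb])⟩
    · rintro ⟨h1, h2⟩ a ha b hb
      rw [mem_insert] at ha hb
      rcases ha with rfl | ha <;> rcases hb with rfl | hb
      · exact G.loopless.irrefl _
      · exact h1 b hb
      · exact fun h => h1 a ha h.symm
      · exact h2 a ha b hb
  simp only [this, prod_insert hu]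
  split_ifs <;> simp_all

lemma hcZ_pos (hl : 0 < lam) (S : Finset V) : 0 < hcZ G lam S := by
  refine Finset.sum_pos' (fun σ _ => by simpa using hcWeight_nonneg G hl σ) ⟨∅, by simp, ?_⟩
  simp [hcWeight, IndepSet]

lemma hcZ_mono (hl : 0 < lam) {S T : Finset V} (h : S ⊆ T) : hcZ G lam S ≤ hcZ G lam T :=
  Finset.sum_le_sum_of_subset_of_nonneg (Finset.powerset_mono.mpr h)
    fun σ _ _ => by simpa using hcWeight_nonneg G hl σ

lemma hcSum_insert {S : Finset V} {u : V} (hu : u ∉ S) (f : Finset V → ℝ) :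
    hcSum G lam (insert u S) f
      = hcSum G lam S f + lam * hcSum G lam (nonNbrs G S u) (fun σ => f (insert u σ)) := by
  unfold hcSum
  rw [Finset.sum_powerset_insert hu]
  congr 1
  have hsub : (nonNbrs G S u).powerset ⊆ S.powerset :=
    Finset.powerset_mono.mpr (Finset.filter_subset _ _)
  rw [Finset.mul_sum, ← Finset.sum_subset hsub]
  · refine Finset.sum_congr rfl fun σ hσ => ?_
    have hσ' := Finset.mem_powerset.mp hσ
    have huσ : u ∉ σ := fun h => hu (Finset.mem_powerset.mp (hsub hσ) h)
    rw [hcWeight_insert G huσ, if_pos fun w hw => (Finset.mem_filter.mp (hσ' hw)).2]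
    ring
  · intro σ hσ hσ'
    have huσ : u ∉ σ := fun h => hu (Finset.mem_powerset.mp hσ h)
    rw [hcWeight_insert G huσ, if_neg, zero_mul]
    intro h
    exact hσ' (Finset.mem_powerset.mpr fun w hw =>
      Finset.mem_filter.mpr ⟨Finset.mem_powerset.mp hσ hw, h w hw⟩)

lemma hcZ_insert {S : Finset V} {u : V} (hu : u ∉ S) :
    hcZ G lam (insert u S) = hcZ G lam S + lam * hcZ G lam (nonNbrs G S u) :=
  hcSum_insert G hu _

lemma hcProb_nonneg (hl : 0 < lam) (S : Finset V) (u : V) : 0 ≤ hcProb G lam S u := by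
  have h1 := hcZ_pos G hl S
  have h2 := hcZ_pos G hl (nonNbrs G S u)
  unfold hcProb; positivity

lemma hcProb_lt_one (hl : 0 < lam) (S : Finset V) (u : V) : hcProb G lam S u < 1 := by
  have h1 := hcZ_pos G hl S
  have h2 := mul_pos hl (hcZ_pos G hl (nonNbrs G S u))
  unfold hcProb
  rw [div_lt_one (by linarith)]
  linarith

lemma hcProb_le (hl : 0 < lam) (S : Finset V) (u : V) : hcProb G lam S u ≤ lam := by
  have h1 := hcZ_pos G hl S
  have h2 := mul_pos hl (hcZ_pos G hl (nonNbrs G S u))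
  have h3 : hcZ G lam (nonNbrs G S u) ≤ hcZ G lam S := hcZ_mono G hl (Finset.filter_subset _ _)
  unfold hcProb
  rw [div_le_iff₀ (by linarith)]
  nlinarith

lemma hcZ_eq_mul (hl : 0 < lam) {S : Finset V} {u : V} (hu : u ∉ S) :
    hcZ G lam S = hcZ G lam (insert u S) * (1 - hcProb G lam S u) := by
  have h1 := hcZ_pos G hl S
  have h2 := mul_pos hl (hcZ_pos G hl (nonNbrs G S u))
  rw [hcZ_insert G hu]
  unfold hcProb
  have : hcZ G lam S + lam * hcZ G lam (nonNbrs G S u) ≠ 0 := by linarith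
  field_simp
  ring

/-- Total expectation, conditioning on the occupation of `u`. -/
lemma hcMean_insert (hl : 0 < lam) {S : Finset V} {u : V} (hu : u ∉ S) (f : Finset V → ℝ) :
    hcMean G lam (insert u S) f = (1 - hcProb G lam S u) * hcMean G lam S f
      + hcProb G lam S u * hcMean G lam (nonNbrs G S u) (fun σ => f (insert u σ)) := by
  have h1 := hcZ_pos G hl S
  have h2 := hcZ_pos G hl (nonNbrs G S u)
  have h3 := mul_pos hl h2
  unfold hcMean hcProb
  rw [hcSum_insert G hu, hcZ_insert G hu]
  have : hcZ G lam S + lam * hcZ G lam (nonNbrs G S u) ≠ 0 := by linarith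
  field_simp
  ring

lemma abs_hcMean_insert_sub (hl : 0 < lam) {S : Finset V} {u : V} (hu : u ∉ S)
    (f : Finset V → ℝ) :
    |hcMean G lam S f - hcMean G lam (insert u S) f| = hcProb G lam S u * hcGap G lam S u f := by
  rw [hcMean_insert G hl hu, hcGap, abs_sub_comm, ← abs_of_nonneg (hcProb_nonneg G hl S u),
    ← abs_mul, abs_of_nonneg (hcProb_nonneg G hl S u)]
  congr 1
  ring

/-- Deleting the vertices of `T` one by one from `S`, with `p u` the occupation probability of `u`
at the time of its deletion. The hypothesis `H` bounds the gap at the children, in the potential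
`√p`. -/
lemma exists_probs (hl : 0 < lam) (f : Finset V → ℝ) (A : ℝ) (S T : Finset V) (hTS : T ⊆ S)
    (H : ∀ S₁ ⊂ S, ∀ u ∈ T, u ∉ S₁ → √(hcProb G lam S₁ u) * hcGap G lam S₁ u f ≤ A) :
    ∃ p : V → ℝ, (∀ u, 0 ≤ p u ∧ p u < 1 ∧ p u ≤ lam) ∧
      hcZ G lam (S \ T) = hcZ G lam S * ∏ u ∈ T, (1 - p u) ∧
      |hcMean G lam (S \ T) f - hcMean G lam S f| ≤ A * ∑ u ∈ T, √(p u) := by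
  induction T using Finset.induction_on with
  | empty => exact ⟨fun _ => 0, fun _ => ⟨le_rfl, one_pos, hl.le⟩, by simp, by simp⟩
  | insert u T hu ih =>
    obtain ⟨p, hp, hZ, hM⟩ := ih (fun w hw => hTS (by simp [hw]))
      (fun S₁ hS₁ w hw => H S₁ hS₁ w (by simp [hw]))
    have huS : u ∈ S := hTS (by simp)
    have hnot : u ∉ S \ insert u T := by simp
    have hins : insert u (S \ insert u T) = S \ T := by
      ext w
      by_cases h : w = u
      · subst h; simp [huS, hu]
      · simp [h]
    set S₁ := S \ insert u T with hS₁
    have hgap := H S₁ (Finset.ssubset_iff_subset_ne.mpr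
      ⟨Finset.sdiff_subset, fun h => hnot (h ▸ huS)⟩)
      u (by simp) hnot
    have hprod : ∀ g : ℝ → ℝ, ∀ w ∈ T,
        g (Function.update p u (hcProb G lam S₁ u) w) = g (p w) := by
      intro g w hw
      rw [Function.update_of_ne]
      rintro rfl
      exact hu hw
    refine ⟨Function.update p u (hcProb G lam S₁ u), ?_, ?_, ?_⟩
    · intro w
      by_cases h : w = u
      · subst h
        simpa using ⟨hcProb_nonneg G hl S₁ w, hcProb_lt_one G hl S₁ w, hcProb_le G hl S₁ w⟩
      · simpa [h] using hp w
    · rw [Finset.prod_insert hu, Finset.prod_congr rfl (hprod fun x => 1 - x),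
        hcZ_eq_mul G hl hnot, hins, hZ, Function.update_self]
      ring
    · rw [Finset.sum_insert hu, Finset.sum_congr rfl (hprod Real.sqrt), Function.update_self]
      have h1 := abs_hcMean_insert_sub G hl hnot f
      rw [hins] at h1
      have h2 : hcProb G lam S₁ u * hcGap G lam S₁ u f ≤ A * √(hcProb G lam S₁ u) := by
        calc hcProb G lam S₁ u * hcGap G lam S₁ u f
            = √(hcProb G lam S₁ u) * (√(hcProb G lam S₁ u) * hcGap G lam S₁ u f) := by
              rw [← mul_assoc, Real.mul_self_sqrt (hcProb_nonneg G hl S₁ u)]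
          _ ≤ √(hcProb G lam S₁ u) * A :=
              mul_le_mul_of_nonneg_left hgap (Real.sqrt_nonneg _)
          _ = _ := mul_comm _ _
      have h3 := abs_sub_le (hcMean G lam S₁ f) (hcMean G lam (S \ T) f) (hcMean G lam S f)
      rw [h1] at h3
      linarith

/-- Adding one occupied vertex to every configuration changes the mean of a `κ`-Lipschitz function
by at most `κ`. -/
lemma abs_hcMean_shift_le (hl : 0 < lam) {κ : ℝ} {f : Finset V → ℝ} (hf : HamLip κ f)
    {S : Finset V} {u : V} (hu : u ∉ S) :
    |hcMean G lam S (fun σ => f (insert u σ)) - hcMean G lam S f| ≤ κ := by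
  have hZ := hcZ_pos G hl S
  unfold hcMean
  rw [← sub_div, abs_div, abs_of_pos hZ, div_le_iff₀ hZ]
  unfold hcSum hcZ hcSum
  rw [← Finset.sum_sub_distrib, Finset.mul_sum]
  refine (Finset.abs_sum_le_sum_abs _ _).trans (Finset.sum_le_sum fun σ hσ => ?_)
  rw [← mul_sub, abs_mul, abs_of_nonneg (hcWeight_nonneg G hl σ), mul_one, mul_comm]
  exact mul_le_mul_of_nonneg_right
    (hf σ u fun h => hu (Finset.mem_powerset.mp hσ h)) (hcWeight_nonneg G hl σ)

/-- One step of the tree recursion for the gap at `u`. -/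
lemma gap_step (hl : 0 < lam) {κ : ℝ} {f : Finset V → ℝ} (hf : HamLip κ f) (A : ℝ)
    {S : Finset V} {u : V} (hu : u ∉ S)
    (H : ∀ S₁ ⊂ S, ∀ w ∈ S.filter (G.Adj u), w ∉ S₁ →
      √(hcProb G lam S₁ w) * hcGap G lam S₁ w f ≤ A) :
    ∃ p : V → ℝ, (∀ w, 0 ≤ p w ∧ p w < 1 ∧ p w ≤ lam) ∧
      (∃ x, x = lam * ∏ w ∈ S.filter (G.Adj u), (1 - p w) ∧ hcProb G lam S u = x / (1 + x)) ∧
      hcGap G lam S u f ≤ κ + A * ∑ w ∈ S.filter (G.Adj u), √(p w) := by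
  obtain ⟨p, hp, hZ, hM⟩ := exists_probs G hl f A S (S.filter (G.Adj u))
    (Finset.filter_subset _ _) H
  have hN : S \ S.filter (G.Adj u) = nonNbrs G S u := by
    ext w; simp [nonNbrs]; tauto
  rw [hN] at hZ hM
  have hZS := hcZ_pos G hl S
  refine ⟨p, hp, ⟨_, rfl, ?_⟩, ?_⟩
  · have hpos : 0 < 1 + lam * ∏ w ∈ S.filter (G.Adj u), (1 - p w) := by
      have : 0 ≤ ∏ w ∈ S.filter (G.Adj u), (1 - p w) :=
        Finset.prod_nonneg fun w _ => by linarith [(hp w).2.1]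
      positivity
    unfold hcProb
    rw [hZ]
    generalize ∏ w ∈ S.filter (G.Adj u), (1 - p w) = P at *
    have : hcZ G lam S + lam * (hcZ G lam S * P) = hcZ G lam S * (1 + lam * P) := by ring
    rw [this]
    field_simp
  · have hu' : u ∉ nonNbrs G S u := fun h => hu (Finset.mem_filter.mp h).1
    have h1 := abs_hcMean_shift_le G hl hf hu'
    have h2 := abs_sub_le (hcMean G lam (nonNbrs G S u) (fun σ => f (insert u σ)))
      (hcMean G lam (nonNbrs G S u) f) (hcMean G lam S f)
    unfold hcGap
    linarith

/-! ### Uniform bound on the gap -/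

/-- A child `w` of `u` has its parent `u` outside `S₁`, hence one neighbour less inside. -/
lemma card_child_le {d : ℕ} (hdeg : ∀ v, #(univ.filter (G.Adj v)) ≤ d + 1) {S S₁ : Finset V}
    {u w : V} (hu : u ∉ S) (hS₁ : S₁ ⊆ S) (huw : G.Adj u w) : #(S₁.filter (G.Adj w)) ≤ d := by
  have hlt : S₁.filter (G.Adj w) ⊂ univ.filter (G.Adj w) := by
    refine Finset.ssubset_iff_subset_ne.mpr ⟨Finset.filter_subset_filter _ (subset_univ _), ?_⟩
    intro h
    have : u ∈ S₁.filter (G.Adj w) := by rw [h]; simp [huw.symm]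
    exact hu (hS₁ (Finset.mem_filter.mp this).1)
  have := Finset.card_lt_card hlt
  have := hdeg w
  omega

/-- The gap below the root, where `u` has at most `d = Δ - 1` neighbours left. The constant
`10 √λ / δ` solves `A = √λ + (1 - δ/10) A`. -/
lemma sqrt_prob_mul_gap_le {d : ℕ} (hd : 2 ≤ d) {δ : ℝ} (hδ : 0 < δ) (hl : 0 < lam)
    (hl' : lam ≤ (1 - δ) * hcCrit (d + 1)) {κ : ℝ} (hκ : 0 ≤ κ) {f : Finset V → ℝ}
    (hf : HamLip κ f) (hdeg : ∀ v, #(univ.filter (G.Adj v)) ≤ d + 1) (S : Finset V) :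
    ∀ u, u ∉ S → #(S.filter (G.Adj u)) ≤ d →
      √(hcProb G lam S u) * hcGap G lam S u f ≤ κ * (√lam * (10 / δ)) := by
  induction S using Finset.strongInduction with
  | H S ih =>
    intro u hu hcard
    obtain ⟨p, hp, ⟨x, hx, hpx⟩, hgap⟩ := gap_step G hl hf (κ * (√lam * (10 / δ))) hu (by
      intro S₁ hS₁ w hw hwS₁
      exact ih S₁ hS₁ w hwS₁ (card_child_le G hdeg hu hS₁.subset (Finset.mem_filter.mp hw).2))
    have hc := contraction (S.filter (G.Adj u)) p hd hcard (fun i _ => (hp i).1)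
      (fun i _ => (hp i).2.1) hδ hl hl' hx
    rw [← hpx] at hc
    set P := hcProb G lam S u
    set Q := ∑ w ∈ S.filter (G.Adj u), √(p w)
    have hP0 : 0 ≤ P := hcProb_nonneg G hl S u
    have hQ0 : 0 ≤ Q := Finset.sum_nonneg fun _ _ => Real.sqrt_nonneg _
    have hα : √P * Q ≤ 1 - δ / 10 := by
      have h1 : (√P * Q) ^ 2 ≤ 1 - δ / 5 := by rwa [mul_pow, Real.sq_sqrt hP0]
      have h0 : 0 ≤ √P * Q := by positivity
      nlinarith [sq_nonneg (√P * Q - 1)]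
    have hsP : √P ≤ √lam := Real.sqrt_le_sqrt (hcProb_le G hl S u)
    have hA : 0 ≤ κ * (√lam * (10 / δ)) := by positivity
    calc √P * hcGap G lam S u f ≤ √P * (κ + κ * (√lam * (10 / δ)) * Q) :=
          mul_le_mul_of_nonneg_left hgap (Real.sqrt_nonneg _)
      _ = κ * √P + κ * (√lam * (10 / δ)) * (√P * Q) := by ring
      _ ≤ κ * √lam + κ * (√lam * (10 / δ)) * (1 - δ / 10) := by gcongr
      _ = κ * (√lam * (10 / δ)) := by field_simp; ring

lemma gap_le {d : ℕ} (hd : 2 ≤ d) {δ : ℝ} (hδ : 0 < δ) (hl : 0 < lam)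
    (hl' : lam ≤ (1 - δ) * hcCrit (d + 1)) {κ : ℝ} (hκ : 0 ≤ κ) {f : Finset V → ℝ}
    (hf : HamLip κ f) (hdeg : ∀ v, #(univ.filter (G.Adj v)) ≤ d + 1) {S : Finset V} {u : V}
    (hu : u ∉ S) : hcGap G lam S u f ≤ κ * (1 + 120 / δ) := by
  obtain ⟨p, hp, -, hgap⟩ := gap_step G hl hf (κ * (√lam * (10 / δ))) hu (by
    intro S₁ hS₁ w hw hwS₁
    exact sqrt_prob_mul_gap_le G hd hδ hl hl' hκ hf hdeg S₁ w hwS₁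
      (card_child_le G hdeg hu hS₁.subset (Finset.mem_filter.mp hw).2))
  have hd' : (2 : ℝ) ≤ d := by exact_mod_cast hd
  have hcard : (#(S.filter (G.Adj u)) : ℝ) ≤ d + 1 := by
    exact_mod_cast (Finset.card_le_card
      (Finset.filter_subset_filter (G.Adj u) (subset_univ S))).trans (hdeg u)
  have hsum : ∑ w ∈ S.filter (G.Adj u), √(p w) ≤ (d + 1) * √lam := by
    calc ∑ w ∈ S.filter (G.Adj u), √(p w) ≤ ∑ w ∈ S.filter (G.Adj u), √lam :=
          Finset.sum_le_sum fun w _ => Real.sqrt_le_sqrt (hp w).2.2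
      _ = #(S.filter (G.Adj u)) * √lam := by simp
      _ ≤ _ := by gcongr
  have hlam12 : lam * (d + 1) ≤ 12 := by
    have hcp := hcCrit_pos hd
    have h1 : lam ≤ hcCrit (d + 1) := hl'.trans (by nlinarith)
    have h2 := hcCrit_succ_mul_le hd
    have h3 : lam * ((d : ℝ) - 1) ≤ 4 :=
      (mul_le_mul_of_nonneg_right h1 (by linarith)).trans h2
    nlinarith
  calc hcGap G lam S u f
      ≤ κ + κ * (√lam * (10 / δ)) * ((d + 1) * √lam) := by
        refine hgap.trans ?_
        gcongr
    _ = κ + κ * (10 / δ) * ((√lam * √lam) * (d + 1)) := by ring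
    _ = κ + κ * (10 / δ) * (lam * (d + 1)) := by rw [Real.mul_self_sqrt hl.le]
    _ ≤ κ + κ * (10 / δ) * 12 := by gcongr
    _ = κ * (1 + 120 / δ) := by ring

/-! ### Moment generating function -/

/-- Azuma–Hoeffding: a uniform gap bound `D` makes every Lipschitz function sub-Gaussian. -/
lemma mgf_le (hl : 0 < lam) {κ D : ℝ} (hκ : 0 ≤ κ)
    (hD : ∀ f : Finset V → ℝ, HamLip κ f → ∀ S u, u ∉ S → hcGap G lam S u f ≤ D) (s : ℝ)
    (S : Finset V) : ∀ f : Finset V → ℝ, HamLip κ f →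
      hcMean G lam S (fun σ => Real.exp (s * f σ))
        ≤ Real.exp (s * hcMean G lam S f + s ^ 2 * D ^ 2 * #S) := by
  induction S using Finset.strongInduction with
  | H S ih =>
    intro f hf
    rcases S.eq_empty_or_nonempty with rfl | ⟨u, huS⟩
    · simp [hcMean, hcZ, hcSum, hcWeight, IndepSet]
    · have hu : u ∉ S.erase u := Finset.notMem_erase u S
      have hlt : S.erase u ⊂ S := Finset.erase_ssubset huS
      have hsub : nonNbrs G (S.erase u) u ⊆ S.erase u := Finset.filter_subset _ _
      have hcard : (#(S.erase u) : ℝ) + 1 = #S := by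
        exact_mod_cast Finset.card_erase_add_one huS
      have hcard' : (#(nonNbrs G (S.erase u) u) : ℝ) ≤ #(S.erase u) := by
        exact_mod_cast Finset.card_le_card hsub
      have e1 := hcMean_insert G hl hu (fun σ => Real.exp (s * f σ))
      have e2 := hcMean_insert G hl hu f
      rw [Finset.insert_erase huS] at e1 e2
      have i0 := ih _ hlt f hf
      have i1 := ih _ (lt_of_le_of_lt hsub hlt) _ (hf.insert hκ u)
      set p := hcProb G lam (S.erase u) u
      have hp0 : 0 ≤ p := hcProb_nonneg G hl _ _
      have hp1 : p < 1 := hcProb_lt_one G hl _ _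
      set a := hcMean G lam (S.erase u) f
      set b := hcMean G lam (nonNbrs G (S.erase u) u) (fun σ => f (insert u σ))
      have hab : |b - a| ≤ D := hD f hf _ _ hu
      set N : ℝ := (#(S.erase u) : ℝ)
      have i1' : hcMean G lam (nonNbrs G (S.erase u) u)
          (fun σ => Real.exp (s * f (insert u σ))) ≤ Real.exp (s * b + s ^ 2 * D ^ 2 * N) :=
        i1.trans (Real.exp_le_exp.mpr (by gcongr))
      calc hcMean G lam S (fun σ => Real.exp (s * f σ))
          ≤ (1 - p) * Real.exp (s * a + s ^ 2 * D ^ 2 * N)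
            + p * Real.exp (s * b + s ^ 2 * D ^ 2 * N) := by
            rw [e1]
            exact add_le_add (mul_le_mul_of_nonneg_left i0 (by linarith))
              (mul_le_mul_of_nonneg_left i1' hp0)
        _ = ((1 - p) * Real.exp (s * a) + p * Real.exp (s * b))
              * Real.exp (s ^ 2 * D ^ 2 * N) := by
            rw [Real.exp_add, Real.exp_add]; ring
        _ ≤ Real.exp (s * ((1 - p) * a + p * b) + s ^ 2 * D ^ 2)
              * Real.exp (s ^ 2 * D ^ 2 * N) :=
            mul_le_mul_of_nonneg_right (two_point_mgf hp0 hp1.le hab) (Real.exp_pos _).le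
        _ = Real.exp (s * hcMean G lam S f + s ^ 2 * D ^ 2 * #S) := by
            rw [← Real.exp_add, e2, ← hcard]; congr 1; ring

lemma expect_hardcore (f : Finset V → ℝ) :
    expect (hardcore G (fun _ => lam)) f = hcMean G lam univ f := by
  simp only [_root_.expect, hardcore, hcMean, hcZ, hcSum, Finset.powerset_univ, mul_one,
    Finset.sum_div]
  exact Finset.sum_congr rfl fun σ _ => by ring

/-- The exponential Markov inequality. -/
lemma tail_le_mgf (hl : 0 < lam) (f : Finset V → ℝ) (r : ℝ) {s : ℝ} (hs : 0 ≤ s) :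
    ∑ σ ∈ univ.filter (fun σ : Finset V => r < f σ), hardcore G (fun _ => lam) σ
      ≤ Real.exp (-(s * r)) * hcMean G lam univ (fun σ => Real.exp (s * f σ)) := by
  have hnn : ∀ σ, 0 ≤ hardcore G (fun _ => lam) σ := fun σ =>
    div_nonneg (hcWeight_nonneg G hl σ) (Finset.sum_nonneg fun τ _ => hcWeight_nonneg G hl τ)
  rw [← expect_hardcore, _root_.expect, Finset.mul_sum]
  calc ∑ σ ∈ univ.filter (fun σ : Finset V => r < f σ), hardcore G (fun _ => lam) σ
      ≤ ∑ σ ∈ univ.filter (fun σ : Finset V => r < f σ),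
          Real.exp (-(s * r)) * (hardcore G (fun _ => lam) σ * Real.exp (s * f σ)) := by
        refine Finset.sum_le_sum fun σ hσ => ?_
        have hr : r < f σ := (Finset.mem_filter.mp hσ).2
        have h1 : 1 ≤ Real.exp (-(s * r)) * Real.exp (s * f σ) := by
          rw [← Real.exp_add]
          exact Real.one_le_exp (by nlinarith)
        calc hardcore G (fun _ => lam) σ
            ≤ hardcore G (fun _ => lam) σ * (Real.exp (-(s * r)) * Real.exp (s * f σ)) :=
              le_mul_of_one_le_right (hnn σ) h1
          _ = _ := by ring
    _ ≤ _ := Finset.sum_le_sum_of_subset_of_nonneg (Finset.filter_subset _ _) fun σ _ _ =>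
        mul_nonneg (Real.exp_pos _).le (mul_nonneg (hnn σ) (Real.exp_pos _).le)

end Model

/-- Sub-Gaussian concentration of Hamming-Lipschitz functions for
the hardcore model at fugacity `λ ≤ (1−δ)·λ_Δ`. -/
theorem hardcore_lipschitz_concentration :
    ∀ δ : ℝ, δ ∈ Set.Ioo (0 : ℝ) 1 →
    ∃ c : ℝ, 0 < c ∧
      ∀ (V : Type) [Fintype V] [DecidableEq V] (G : SimpleGraph V)
        [DecidableRel G.Adj] (Δ : ℕ), 3 ≤ Δ →
        (∀ v : V, G.degree v ≤ Δ) →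
        ∀ lam : ℝ, 0 < lam → lam ≤ (1 - δ) * hcCrit Δ →
          ∀ (κ : ℝ) (f : Finset V → ℝ), 0 < κ →
            (∀ (σ : Finset V) (v : V), v ∉ σ → |f (insert v σ) - f σ| ≤ κ) →
            ∀ t : ℝ, 0 ≤ t →
              ∑ σ ∈ univ.filter
                  (fun σ : Finset V =>
                    expect (hardcore G (fun _ => lam)) f + t < f σ),
                  hardcore G (fun _ => lam) σ ≤
                Real.exp (-(c * t ^ 2) / (κ ^ 2 * Fintype.card V)) := by
  intro δ hδ
  obtain ⟨hδ0, hδ1⟩ := hδ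
  set C : ℝ := 1 + 120 / δ with hC
  have hC0 : 0 < C := by positivity
  refine ⟨1 / (4 * C ^ 2), by positivity, ?_⟩
  intro V _ _ G _ Δ hΔ hdeg lam hl hl' κ f hκ hf t ht
  obtain ⟨d, rfl⟩ : ∃ d, Δ = d + 1 := ⟨Δ - 1, by omega⟩
  have hdeg' : ∀ v,
      #(@Finset.filter V (G.Adj v) (fun _ => Classical.propDecidable _) univ) ≤ d + 1 := by
    intro v
    have := hdeg v
    rw [← SimpleGraph.card_neighborFinset_eq_degree, SimpleGraph.neighborFinset_eq_filter] at this
    convert this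
  have hmgf := fun s => mgf_le G hl hκ.le (D := κ * C)
    (fun g hg S u hu => gap_le G (by omega) hδ0 hl hl' hκ.le hg hdeg' hu) s univ f hf
  -- for `card V = 0` this choice is the junk value `s = 0`, which still gives the trivial bound
  set s : ℝ := t / (2 * (κ * C) ^ 2 * Fintype.card V) with hs
  have hs0 : 0 ≤ s := by positivity
  refine (tail_le_mgf G hl f _ hs0).trans ?_
  rw [expect_hardcore]
  refine (mul_le_mul_of_nonneg_left (hmgf s) (Real.exp_pos _).le).trans (le_of_eq ?_)
  rw [← Real.exp_add]
  congr 1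
  rw [Finset.card_univ]
  rcases Nat.eq_zero_or_pos (Fintype.card V) with h0 | h0
  · simp [hs, h0]
  · have : (0 : ℝ) < Fintype.card V := by exact_mod_cast h0
    rw [hs]
    field_simp
    ring
end
end

section
/- For every δ ∈ (0,1) there exists c > 0 (depending only on δ) such that the following holds. Let G = (V,E) be a finite simple graph on n vertices with maximum degree at most Δ, where Δ ≥ 3 is an integer, let β ∈ [(Δ−2+δ)/(Δ−δ), (Δ−δ)/(Δ−2+δ)] and λ > 0, and let μ be the Ising model on G with edge activity β and external field λ. Let κ > 0 and let f : {±1}^V → ℝ satisfy |f(σ) − f(σ')| ≤ κ whenever σ, σ' ∈ {±1}^V differ in exactly one coordinate. Then for all t ≥ 0, P_μ( f − E_μ[f] > t ) ≤ exp(−c·t²/(κ²·n)). -/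
/-!
The proof combines a martingale-type induction over the vertices with a bound, uniform in the
external fields and in the pinning, on how much the mean of a Lipschitz function can change when
one pinned spin is flipped.

*Influence bound.* Let `M(h, f)` be the mean of `f` under the Ising model with arbitrary
vertex-dependent nonnegative fields `h` (a pinned vertex is one whose field charges a single spin).
Flipping a pinned spin `v` costs at most `κ` for the explicit dependence of `f` on `σ v`, and it
multiplies the odds at every neighbour `u` of `v` by `β²` or `β⁻²`. Changing these fields one
neighbour at a time, each change moves the probability of `σ u = +` by at most
`θ = |β - 1| / (β + 1)`, so it changes the mean by at most `θ` times the effect of flipping a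
pinned spin at `u`, in a system in which `v` stays pinned and `u` is newly pinned. There, `u` has
at most `Δ - 1` free neighbours, and the hypothesis on `β` says exactly that
`(Δ - 1) θ ≤ 1 - δ`. Hence by induction the effect is at most
`κ (1 + (1 - δ) + (1 - δ)² + ⋯) = κ / δ` at vertices with at most `Δ - 1` free neighbours, and so
at most `2 κ / δ` at an arbitrary vertex (`influence`, `influence_root`).

*Concentration.* Conditioning on the vertices one at a time, the two-point inequality
`two_point_mgf` and the influence bound give
`M(h, exp (s f)) ≤ exp (s M(h, f) + s² (2 κ / δ)² n / 2)` (`mgf_bound`), and the claim follows from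
Markov's inequality with the optimal `s`, with `c = δ² / 8`.
-/

open Finset

noncomputable section
attribute [local instance] Classical.propDecidable

variable {V : Type*} [Fintype V] [DecidableEq V]

/-- Unnormalized Ising weight: `λ^{#plus} · β^{#monochromatic edges}`.  Each unordered
monochromatic edge is counted twice in the product over ordered pairs, whence the
square root of `β`. -/
def isingWeight (G : SimpleGraph V) (β lam : ℝ) (σ : V → Bool) : ℝ :=
  lam ^ (univ.filter fun v => σ v = true).card *
    ∏ u : V, ∏ w : V, (if G.Adj u w ∧ σ u = σ w then Real.sqrt β else 1)

/-- The Ising model on `G` with edge activity `β` and external field `lam`,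
as a probability distribution on `V → Bool` (`true` = spin `+1`). -/
def isingModel (G : SimpleGraph V) (β lam : ℝ) (σ : V → Bool) : ℝ :=
  isingWeight G β lam σ / ∑ τ : V → Bool, isingWeight G β lam τ

set_option linter.unusedSectionVars false

/-! ### Gibbs means with general fields -/

/-- Product of the field weights `h v (σ v)` over all vertices except `u`, times the interaction
`A σ`. -/
def restWeight (A : (V → Bool) → ℝ) (h : V → Bool → ℝ) (u : V) (σ : V → Bool) : ℝ :=
  (∏ v ∈ univ.erase u, h v (σ v)) * A σ

/-- Unnormalized expectation of `f` for the weight `(∏ v, h v (σ v)) * A σ`: `A` is the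
interaction and `h v b` the field at `v` in favour of the spin `b`. -/
def gibbsSum (A : (V → Bool) → ℝ) (h : V → Bool → ℝ) (f : (V → Bool) → ℝ) : ℝ :=
  ∑ σ : V → Bool, (∏ v, h v (σ v)) * A σ * f σ

/-- Expectation of `f` under the Gibbs distribution with interaction `A` and fields `h`. -/
def gibbsMean (A : (V → Bool) → ℝ) (h : V → Bool → ℝ) (f : (V → Bool) → ℝ) : ℝ :=
  gibbsSum A h f / gibbsSum A h (fun _ => 1)

/-- The field that pins a spin to the value `b`. -/
def ptMass (b c : Bool) : ℝ := if c = b then 1 else 0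

/-- Fields are admissible if they are nonnegative and do not forbid both spins at any vertex.
A vertex may be pinned, one of its two weights being `0`. -/
def Admissible (h : V → Bool → ℝ) : Prop :=
  (∀ v b, 0 ≤ h v b) ∧ ∀ v, ∃ b, 0 < h v b

/-- The field `h` charges at most one of the two spins at `v`. -/
def Pinned (h : V → Bool → ℝ) (v : V) : Prop := h v true = 0 ∨ h v false = 0

/-- `f` changes by at most `κ` when one spin is flipped. -/
def SpinLip (κ : ℝ) (f : (V → Bool) → ℝ) : Prop :=
  ∀ (σ : V → Bool) (v : V), |f (Function.update σ v (!σ v)) - f σ| ≤ κ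

lemma ptMass_nonneg (b c : Bool) : 0 ≤ ptMass b c := by
  unfold ptMass; split_ifs <;> norm_num

lemma Admissible.update {h : V → Bool → ℝ} (hh : Admissible h) (u : V) {g : Bool → ℝ}
    (g0 : ∀ b, 0 ≤ g b) (g1 : ∃ b, 0 < g b) : Admissible (Function.update h u g) := by
  constructor
  · intro v b
    by_cases e : v = u
    · subst e; simpa using g0 b
    · simpa [e] using hh.1 v b
  · intro v
    by_cases e : v = u
    · subst e; simpa using g1
    · simpa [e] using hh.2 v

lemma Admissible.pin {h : V → Bool → ℝ} (hh : Admissible h) (u : V) (b : Bool) :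
    Admissible (Function.update h u (ptMass b)) :=
  hh.update u (ptMass_nonneg b) ⟨b, by simp [ptMass]⟩

lemma pinned_pin (h : V → Bool → ℝ) (u : V) (b : Bool) :
    Pinned (Function.update h u (ptMass b)) u := by
  unfold Pinned
  cases b <;> simp [ptMass]

lemma pinned_update_of_ne {h : V → Bool → ℝ} {u w : V} (g : Bool → ℝ) (e : w ≠ u) :
    Pinned (Function.update h u g) w ↔ Pinned h w := by
  simp [Pinned, e]

lemma prod_eq_rest (A : (V → Bool) → ℝ) (h : V → Bool → ℝ) (u : V) (σ : V → Bool) :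
    (∏ v, h v (σ v)) * A σ = h u (σ u) * restWeight A h u σ := by
  unfold restWeight
  rw [← mul_assoc, Finset.mul_prod_erase univ (fun v => h v (σ v)) (mem_univ u)]

lemma restWeight_update (A : (V → Bool) → ℝ) (h : V → Bool → ℝ) (u : V) (g : Bool → ℝ)
    (σ : V → Bool) : restWeight A (Function.update h u g) u σ = restWeight A h u σ := by
  unfold restWeight
  congr 1
  refine Finset.prod_congr rfl fun v hv => ?_
  rw [Function.update_of_ne (Finset.ne_of_mem_erase hv)]

lemma gibbsSum_update (A : (V → Bool) → ℝ) (h : V → Bool → ℝ) (u : V) (g : Bool → ℝ)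
    (f : (V → Bool) → ℝ) :
    gibbsSum A (Function.update h u g) f = ∑ σ, g (σ u) * restWeight A h u σ * f σ := by
  unfold gibbsSum
  refine Finset.sum_congr rfl fun σ _ => ?_
  rw [prod_eq_rest A _ u, restWeight_update, Function.update_self]

/-- Decomposition of a Gibbs sum according to the spin at `u`. -/
lemma gibbsSum_split (A : (V → Bool) → ℝ) (h : V → Bool → ℝ) (u : V) (f : (V → Bool) → ℝ) :
    gibbsSum A h f = h u true * gibbsSum A (Function.update h u (ptMass true)) f +
      h u false * gibbsSum A (Function.update h u (ptMass false)) f := by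
  rw [gibbsSum_update, gibbsSum_update, Finset.mul_sum, Finset.mul_sum, ← Finset.sum_add_distrib]
  unfold gibbsSum
  refine Finset.sum_congr rfl fun σ _ => ?_
  rw [prod_eq_rest A _ u]
  cases σ u <;> simp [ptMass, mul_assoc]

lemma gibbsSum_pos {A : (V → Bool) → ℝ} (hA : ∀ σ, 0 < A σ) {h : V → Bool → ℝ}
    (hh : Admissible h) : 0 < gibbsSum A h (fun _ => 1) := by
  choose τ hτ using hh.2
  unfold gibbsSum
  refine Finset.sum_pos' (fun σ _ => ?_) ⟨τ, mem_univ _, ?_⟩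
  · have := Finset.prod_nonneg (s := univ) fun v _ => hh.1 v (σ v)
    have := (hA σ).le
    positivity
  · have := Finset.prod_pos (s := univ) fun v _ => hτ v
    have := hA τ
    positivity

lemma gibbsMean_mono {A : (V → Bool) → ℝ} (hA : ∀ σ, 0 < A σ) {h : V → Bool → ℝ}
    (hh : Admissible h) {f g : (V → Bool) → ℝ} (hfg : ∀ σ, f σ ≤ g σ) :
    gibbsMean A h f ≤ gibbsMean A h g := by
  unfold gibbsMean
  refine div_le_div_of_nonneg_right ?_ (gibbsSum_pos hA hh).le
  unfold gibbsSum
  refine Finset.sum_le_sum fun σ _ => ?_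
  have := Finset.prod_nonneg (s := univ) fun v _ => hh.1 v (σ v)
  exact mul_le_mul_of_nonneg_left (hfg σ) (mul_nonneg this (hA σ).le)

lemma gibbsMean_add_const {A : (V → Bool) → ℝ} (hA : ∀ σ, 0 < A σ) {h : V → Bool → ℝ}
    (hh : Admissible h) (f : (V → Bool) → ℝ) (c : ℝ) :
    gibbsMean A h (fun σ => f σ + c) = gibbsMean A h f + c := by
  have h0 := (gibbsSum_pos hA hh).ne'
  unfold gibbsMean
  rw [div_add' _ _ _ h0]
  congr 1
  unfold gibbsSum
  rw [Finset.mul_sum, ← Finset.sum_add_distrib]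
  refine Finset.sum_congr rfl fun σ _ => ?_
  ring

lemma gibbsMean_dist {A : (V → Bool) → ℝ} (hA : ∀ σ, 0 < A σ) {h : V → Bool → ℝ}
    (hh : Admissible h) {f g : (V → Bool) → ℝ} {κ : ℝ} (hfg : ∀ σ, |f σ - g σ| ≤ κ) :
    |gibbsMean A h f - gibbsMean A h g| ≤ κ := by
  have h1 : gibbsMean A h f ≤ gibbsMean A h (fun σ => g σ + κ) :=
    gibbsMean_mono hA hh fun σ => by linarith [(abs_le.1 (hfg σ)).2]
  have h2 : gibbsMean A h g ≤ gibbsMean A h (fun σ => f σ + κ) :=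
    gibbsMean_mono hA hh fun σ => by linarith [(abs_le.1 (hfg σ)).1]
  rw [gibbsMean_add_const hA hh] at h1 h2
  rw [abs_le]; constructor <;> linarith

/-- The mean is a mixture of the means conditioned on the spin at `u`, with weights that do not
depend on the function averaged. -/
lemma gibbsMean_mix {A : (V → Bool) → ℝ} (hA : ∀ σ, 0 < A σ) {h : V → Bool → ℝ}
    (hh : Admissible h) (u : V) :
    ∃ p : ℝ, 0 ≤ p ∧ p ≤ 1 ∧ ∀ f, gibbsMean A h f =
      p * gibbsMean A (Function.update h u (ptMass true)) f +
      (1 - p) * gibbsMean A (Function.update h u (ptMass false)) f := by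
  have P := gibbsSum_pos hA (hh.pin u true)
  have Q := gibbsSum_pos hA (hh.pin u false)
  have Z := gibbsSum_pos hA hh
  have a0 := hh.1 u true
  have b0 := hh.1 u false
  have Zs := gibbsSum_split A h u (fun _ => 1)
  refine ⟨h u true * gibbsSum A (Function.update h u (ptMass true)) (fun _ => 1) /
    gibbsSum A h (fun _ => 1), by positivity, ?_, fun f => ?_⟩
  · rw [div_le_one Z, Zs]
    have : 0 ≤ h u false * gibbsSum A (Function.update h u (ptMass false)) (fun _ => 1) := by
      positivity
    linarith
  · unfold gibbsMean
    rw [gibbsSum_split A h u f]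
    have : 1 - h u true * gibbsSum A (Function.update h u (ptMass true)) (fun _ => 1) /
        gibbsSum A h (fun _ => 1) =
        h u false * gibbsSum A (Function.update h u (ptMass false)) (fun _ => 1) /
        gibbsSum A h (fun _ => 1) := by
      field_simp
      linarith
    rw [this]
    field_simp

/-! ### Tilting fields -/

/-- The factor gained by the weight of the spin `b` at a vertex when a neighbouring spin is flipped
from `-` to `+`. -/
def tiltFactor (β : ℝ) (b : Bool) : ℝ := if b = true then β else β⁻¹

/-- The effective fields after flipping, from `-` to `+`, a pinned spin whose neighbours are the
vertices of `T`. -/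
def tilt (β : ℝ) (T : Finset V) (h : V → Bool → ℝ) : V → Bool → ℝ :=
  fun u b => if u ∈ T then tiltFactor β b * h u b else h u b

lemma tiltFactor_pos {β : ℝ} (hβ : 0 < β) (b : Bool) : 0 < tiltFactor β b := by
  unfold tiltFactor; split_ifs <;> positivity

lemma Admissible.tilt {β : ℝ} (hβ : 0 < β) {h : V → Bool → ℝ} (hh : Admissible h)
    (T : Finset V) : Admissible (tilt β T h) := by
  constructor
  · intro v b
    have := tiltFactor_pos hβ b
    have := hh.1 v b
    unfold _root_.tilt; split_ifs <;> positivity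
  · intro v
    obtain ⟨b, hb⟩ := hh.2 v
    refine ⟨b, ?_⟩
    have := tiltFactor_pos hβ b
    unfold _root_.tilt; split_ifs <;> positivity

lemma Pinned.tilt {β : ℝ} {h : V → Bool → ℝ} {v : V} (hv : Pinned h v)
    (T : Finset V) : Pinned (tilt β T h) v := by
  unfold Pinned _root_.tilt at *
  rcases hv with hv | hv <;> simp [hv]

lemma tilt_insert (β : ℝ) (T : Finset V) (h : V → Bool → ℝ) {u : V} (hu : u ∉ T) :
    tilt β (insert u T) h =
      Function.update (tilt β T h) u (fun b => tiltFactor β b * tilt β T h u b) := by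
  funext v b
  by_cases e : v = u
  · subst e; simp [tilt, hu]
  · simp [tilt, e]

/-- A two-point distribution with masses proportional to `a, b` moves by at most
`|β - 1| / (β + 1)` when its odds are multiplied by `β²`. -/
lemma odds_shift {β a b : ℝ} (hβ : 0 < β) (ha : 0 ≤ a) (hb : 0 ≤ b) (hab : 0 < a + b) (x y : ℝ) :
    |(β * a * x + β⁻¹ * b * y) / (β * a + β⁻¹ * b) - (a * x + b * y) / (a + b)| ≤
      |β - 1| / (β + 1) * |x - y| := by
  have hD : 0 < β ^ 2 * a + b := by
    rcases ha.eq_or_lt with h | h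
    · subst h; simpa using hab
    · positivity
  have e1 : (β * a * x + β⁻¹ * b * y) / (β * a + β⁻¹ * b) =
      (β ^ 2 * a * x + b * y) / (β ^ 2 * a + b) := by
    have : β * a + β⁻¹ * b = (β ^ 2 * a + b) / β := by field_simp
    rw [this]
    field_simp
  have e2 : (β ^ 2 * a * x + b * y) / (β ^ 2 * a + b) - (a * x + b * y) / (a + b) =
      (a * b * (β + 1)) / ((β ^ 2 * a + b) * (a + b)) * (β - 1) * (x - y) := by
    field_simp
    ring
  rw [e1, e2, abs_mul, abs_mul, abs_of_nonneg (by positivity)]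
  refine mul_le_mul_of_nonneg_right ?_ (abs_nonneg _)
  rw [div_mul_eq_mul_div, div_le_div_iff₀ (by positivity) (by positivity)]
  have key : a * b * (β + 1) * (β + 1) ≤ (β ^ 2 * a + b) * (a + b) := by
    nlinarith [sq_nonneg (β * a - b), mul_nonneg ha hb]
  calc a * b * (β + 1) * |β - 1| * (β + 1) = |β - 1| * (a * b * (β + 1) * (β + 1)) := by ring
    _ ≤ _ := mul_le_mul_of_nonneg_left key (abs_nonneg _)

/-- Tilting the field at one vertex `u` acts on means at most `|β - 1| / (β + 1)` times as much as
flipping a pinned spin at `u`. -/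
lemma tilt_single {A : (V → Bool) → ℝ} (hA : ∀ σ, 0 < A σ) {h : V → Bool → ℝ}
    (hh : Admissible h) {β : ℝ} (hβ : 0 < β) (u : V) (f : (V → Bool) → ℝ) :
    |gibbsMean A (Function.update h u (fun b => tiltFactor β b * h u b)) f - gibbsMean A h f| ≤
      |β - 1| / (β + 1) * |gibbsMean A (Function.update h u (ptMass true)) f -
        gibbsMean A (Function.update h u (ptMass false)) f| := by
  have P := gibbsSum_pos hA (hh.pin u true)
  have Q := gibbsSum_pos hA (hh.pin u false)
  have Z := gibbsSum_pos hA hh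
  have a0 := hh.1 u true
  have b0 := hh.1 u false
  have Zs := gibbsSum_split A h u (fun _ => 1)
  rw [Zs] at Z
  have key := odds_shift hβ (mul_nonneg a0 P.le) (mul_nonneg b0 Q.le) Z
    (gibbsMean A (Function.update h u (ptMass true)) f)
    (gibbsMean A (Function.update h u (ptMass false)) f)
  refine le_of_eq_of_le ?_ key
  have hP : ∀ c : ℝ, c * gibbsSum A (Function.update h u (ptMass true)) (fun _ => 1) *
      gibbsMean A (Function.update h u (ptMass true)) f =
      c * gibbsSum A (Function.update h u (ptMass true)) f := by
    intro c; unfold gibbsMean; field_simp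
  have hQ : ∀ c : ℝ, c * gibbsSum A (Function.update h u (ptMass false)) (fun _ => 1) *
      gibbsMean A (Function.update h u (ptMass false)) f =
      c * gibbsSum A (Function.update h u (ptMass false)) f := by
    intro c; unfold gibbsMean; field_simp
  congr 2
  · rw [← mul_assoc, ← mul_assoc, hP, hQ]
    unfold gibbsMean
    rw [gibbsSum_split A _ u f, gibbsSum_split A _ u (fun _ => 1)]
    simp [tiltFactor]
  · rw [hP, hQ]
    unfold gibbsMean
    rw [← Zs, ← gibbsSum_split]

lemma tilt_single_pinned {A : (V → Bool) → ℝ} {h : V → Bool → ℝ} {β : ℝ} (hβ : 0 < β) {u : V}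
    (hu : Pinned h u) (f : (V → Bool) → ℝ) :
    gibbsMean A (Function.update h u (fun b => tiltFactor β b * h u b)) f = gibbsMean A h f := by
  have hβ' := hβ.ne'
  unfold gibbsMean
  rw [gibbsSum_split A _ u f, gibbsSum_split A _ u (fun _ => 1), gibbsSum_split A h u f,
    gibbsSum_split A h u (fun _ => 1)]
  rcases hu with hu | hu
  · simp only [Function.update_self, Function.update_idem, hu, mul_zero, zero_mul, zero_add,
      mul_assoc]
    rw [mul_div_mul_left _ _ (tiltFactor_pos hβ _).ne']
  · simp only [Function.update_self, Function.update_idem, hu, mul_zero, zero_mul, add_zero,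
      mul_assoc]
    rw [mul_div_mul_left _ _ (tiltFactor_pos hβ _).ne']

/-- Tilting the fields of all vertices in `T`, one vertex at a time; only the free vertices of `T`
contribute. -/
lemma tilt_many {A : (V → Bool) → ℝ} (hA : ∀ σ, 0 < A σ) {β : ℝ} (hβ : 0 < β) (S : Finset V)
    {h : V → Bool → ℝ} (hh : Admissible h) (hS : ∀ w ∉ S, Pinned h w)
    (f : (V → Bool) → ℝ) {B : ℝ} (T : Finset V)
    (hB : ∀ u ∈ T, u ∈ S → ∀ h' : V → Bool → ℝ, Admissible h' → (∀ w ∉ S, Pinned h' w) →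
      |gibbsMean A (Function.update h' u (ptMass true)) f -
        gibbsMean A (Function.update h' u (ptMass false)) f| ≤ B) :
    |gibbsMean A (tilt β T h) f - gibbsMean A h f| ≤
      (T ∩ S).card * (|β - 1| / (β + 1) * B) := by
  induction T using Finset.induction_on with
  | empty =>
    have : tilt β ∅ h = h := by funext u b; simp [tilt]
    simp [this]
  | insert u T hu ih =>
    have ih' := ih fun w hw => hB w (Finset.mem_insert_of_mem hw)
    rw [tilt_insert β T h hu]
    by_cases huS : u ∈ S
    · have h1 := tilt_single hA (hh.tilt hβ T) hβ u f
      have h2 := hB u (Finset.mem_insert_self _ _) huS (tilt β T h) (hh.tilt hβ T)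
        fun w hw => (hS w hw).tilt T
      have h3 : |β - 1| / (β + 1) * |gibbsMean A (Function.update (tilt β T h) u (ptMass true)) f -
        gibbsMean A (Function.update (tilt β T h) u (ptMass false)) f| ≤
          |β - 1| / (β + 1) * B := mul_le_mul_of_nonneg_left h2 (by positivity)
      rw [Finset.insert_inter_of_mem huS, Finset.card_insert_of_notMem (by simp [hu])]
      push_cast
      calc _ ≤ _ := abs_sub_le _ (gibbsMean A (tilt β T h) f) _
        _ ≤ _ := by linarith
    · rw [Finset.insert_inter_of_notMem huS, tilt_single_pinned hβ ((hS u huS).tilt T)]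
      exact ih'

/-! ### The influence of a pinned spin -/

/-- Flipping the pinned spin at `v` from `-` to `+` amounts to tilting the fields of its
neighbours `N v`, and replacing `f` by its section at `σ v = +`. -/
lemma gibbsSum_flip {A : (V → Bool) → ℝ} {β : ℝ} {N : V → Finset V}
    (hflip : ∀ σ v, A (Function.update σ v true) =
      A (Function.update σ v false) * ∏ u ∈ N v, tiltFactor β (σ u))
    (h : V → Bool → ℝ) {v : V} (hv : v ∉ N v) (f : (V → Bool) → ℝ) :
    gibbsSum A (Function.update h v (ptMass true)) f =
      gibbsSum A (tilt β (N v) (Function.update h v (ptMass false)))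
        (fun σ => f (Function.update σ v true)) := by
  have e : tilt β (N v) (Function.update h v (ptMass false)) =
      Function.update (tilt β (N v) h) v (ptMass false) := by
    funext w b
    by_cases hw : w = v
    · subst hw; simp [tilt, hv]
    · simp [tilt, hw]
  rw [e, gibbsSum_update, gibbsSum_update]
  have hinv : Function.Involutive (fun σ : V → Bool => Function.update σ v (!σ v)) := by
    intro σ; simp
  refine Fintype.sum_equiv (Function.Involutive.toPerm _ hinv) _ _ fun σ => ?_
  simp only [Function.Involutive.coe_toPerm, Function.update_self, Function.update_idem]
  cases hσ : σ v
  · simp [ptMass]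
  · have hσ' : Function.update σ v true = σ := by rw [← hσ]; exact Function.update_eq_self v σ
    have key : restWeight A h v σ =
        restWeight A (tilt β (N v) h) v (Function.update σ v false) := by
      unfold restWeight
      have h1 := hflip σ v
      rw [hσ'] at h1
      rw [h1]
      have h2 : ∏ w ∈ univ.erase v, tilt β (N v) h w (Function.update σ v false w) =
          (∏ u ∈ N v, tiltFactor β (σ u)) * ∏ w ∈ univ.erase v, h w (σ w) := by
        have hsub : N v ⊆ univ.erase v := fun w hw =>
          Finset.mem_erase.2 ⟨fun h => hv (h ▸ hw), mem_univ _⟩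
        have h3 : ∏ u ∈ N v, tiltFactor β (σ u) =
            ∏ w ∈ univ.erase v, if w ∈ N v then tiltFactor β (σ w) else 1 := by
          rw [← Finset.prod_subset hsub (by intro w _ hw; simp [hw])]
          exact Finset.prod_congr rfl fun w hw => by simp [hw]
        rw [h3, ← Finset.prod_mul_distrib]
        refine Finset.prod_congr rfl fun w hw => ?_
        rw [Function.update_of_ne (Finset.ne_of_mem_erase hw)]
        unfold tilt
        split_ifs <;> simp
      rw [h2]; ring
    simp [ptMass, hσ', key]

lemma SpinLip.nonneg {κ : ℝ} {f : (V → Bool) → ℝ} (hf : SpinLip κ f) (v : V) : 0 ≤ κ :=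
  (abs_nonneg _).trans (hf (fun _ => true) v)

lemma SpinLip.dist_plusSlice {κ : ℝ} {f : (V → Bool) → ℝ} (hf : SpinLip κ f) (v : V)
    (σ : V → Bool) : |f (Function.update σ v true) - f σ| ≤ κ := by
  cases hσ : σ v
  · simpa [hσ] using hf σ v
  · rw [← hσ, Function.update_eq_self]; simpa using hf.nonneg v

lemma SpinLip.plusSlice {κ : ℝ} {f : (V → Bool) → ℝ} (hf : SpinLip κ f) (v : V) :
    SpinLip κ (fun σ => f (Function.update σ v true)) := by
  intro σ u
  by_cases e : u = v
  · subst e; simpa using hf.nonneg u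
  · have := hf (Function.update σ v true) u
    rw [Function.update_of_ne e, Function.update_comm (Ne.symm e)] at this
    simpa using this

/-- One step of the recursion for the influence of `v`: if every free neighbour of `v` has
influence at most `B`, then `v` has influence at most `κ + d θ B`, with `d` the number of free
neighbours of `v`. -/
lemma influence_step {A : (V → Bool) → ℝ} (hA : ∀ σ, 0 < A σ) {β : ℝ} (hβ : 0 < β)
    {N : V → Finset V} (hflip : ∀ σ v, A (Function.update σ v true) =
      A (Function.update σ v false) * ∏ u ∈ N v, tiltFactor β (σ u))
    {κ B : ℝ} (S : Finset V) {h : V → Bool → ℝ} (hh : Admissible h) {v : V} (hv : v ∉ N v)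
    (hS : ∀ w ∉ S, w ≠ v → Pinned h w)
    (hB : ∀ u ∈ N v, u ∈ S → ∀ h' : V → Bool → ℝ, Admissible h' → (∀ w ∉ S, Pinned h' w) →
      ∀ f, SpinLip κ f → |gibbsMean A (Function.update h' u (ptMass true)) f -
        gibbsMean A (Function.update h' u (ptMass false)) f| ≤ B)
    {f : (V → Bool) → ℝ} (hf : SpinLip κ f) :
    |gibbsMean A (Function.update h v (ptMass true)) f -
      gibbsMean A (Function.update h v (ptMass false)) f| ≤
      κ + (N v ∩ S).card * (|β - 1| / (β + 1) * B) := by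
  have hh0 := hh.pin v false
  have hS0 : ∀ w ∉ S, Pinned (Function.update h v (ptMass false)) w := by
    intro w hw
    by_cases e : w = v
    · subst e; exact pinned_pin _ _ _
    · exact (pinned_update_of_ne _ e).2 (hS w hw e)
  have e1 : gibbsMean A (Function.update h v (ptMass true)) f =
      gibbsMean A (tilt β (N v) (Function.update h v (ptMass false)))
        (fun σ => f (Function.update σ v true)) := by
    unfold gibbsMean
    rw [gibbsSum_flip hflip h hv f, gibbsSum_flip hflip h hv (fun _ => 1)]
  have h1 := tilt_many hA hβ S hh0 hS0 (fun σ => f (Function.update σ v true)) (B := B) (N v)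
    fun u hu huS h' a b => hB u hu huS h' a b _ (hf.plusSlice v)
  have h2 := gibbsMean_dist hA hh0 (hf.dist_plusSlice v)
  rw [e1]
  calc _ ≤ _ := abs_sub_le _ (gibbsMean A (Function.update h v (ptMass false))
        (fun σ => f (Function.update σ v true))) _
    _ ≤ _ := by linarith

/-- Influence of a pinned vertex with at most `D` free neighbours, when all degrees are at most
`D + 1` and `D θ ≤ 1 - δ`. The degree condition is inherited along the recursion, since each
vertex visited has the previously visited one as a pinned neighbour. -/
lemma influence {A : (V → Bool) → ℝ} (hA : ∀ σ, 0 < A σ) {β : ℝ} (hβ : 0 < β)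
    {N : V → Finset V} (hflip : ∀ σ v, A (Function.update σ v true) =
      A (Function.update σ v false) * ∏ u ∈ N v, tiltFactor β (σ u))
    (hirr : ∀ v, v ∉ N v) (hsymm : ∀ u v, u ∈ N v → v ∈ N u)
    {D : ℕ} (hdeg : ∀ v, (N v).card ≤ D + 1) {δ : ℝ} (hδ : 0 < δ)
    (hθ : D * (|β - 1| / (β + 1)) ≤ 1 - δ) {κ : ℝ} (hκ : 0 ≤ κ) (S : Finset V) :
    ∀ h : V → Bool → ℝ, Admissible h → ∀ v ∉ S, (∀ w ∉ S, w ≠ v → Pinned h w) →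
      (N v ∩ S).card ≤ D → ∀ f, SpinLip κ f →
      |gibbsMean A (Function.update h v (ptMass true)) f -
        gibbsMean A (Function.update h v (ptMass false)) f| ≤ κ / δ := by
  induction S using Finset.strongInduction with
  | H S ih =>
    intro h hh v hvS hS hcard f hf
    refine (influence_step hA hβ hflip S hh (hirr v) hS (B := κ / δ) ?_ hf).trans ?_
    · intro u hu huS h' hh' hS' g hg
      refine ih (S.erase u) (Finset.erase_ssubset huS) h' hh' u (Finset.notMem_erase u S) ?_ ?_ g hg
      · intro w hw hwu
        exact hS' w fun hwS => hw (Finset.mem_erase.2 ⟨hwu, hwS⟩)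
      · have hsub : N u ∩ S.erase u ⊆ (N u).erase v := by
          intro w hw
          rw [Finset.mem_inter, Finset.mem_erase] at hw
          exact Finset.mem_erase.2 ⟨fun e => hvS (e ▸ hw.2.2), hw.1⟩
        have h1 := Finset.card_le_card hsub
        rw [Finset.card_erase_of_mem (hsymm u v hu)] at h1
        have := hdeg u
        omega
    · have hc : ((N v ∩ S).card : ℝ) ≤ D := by exact_mod_cast hcard
      have h0 : 0 ≤ |β - 1| / (β + 1) := by positivity
      have h1 : ((N v ∩ S).card : ℝ) * (|β - 1| / (β + 1)) ≤ 1 - δ :=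
        (mul_le_mul_of_nonneg_right hc h0).trans hθ
      have h2 : 0 ≤ κ / δ := by positivity
      calc κ + ((N v ∩ S).card : ℝ) * (|β - 1| / (β + 1) * (κ / δ))
          = κ + ((N v ∩ S).card : ℝ) * (|β - 1| / (β + 1)) * (κ / δ) := by ring
        _ ≤ κ + (1 - δ) * (κ / δ) := by
          have := mul_le_mul_of_nonneg_right h1 h2
          linarith
        _ = κ / δ := by field_simp; ring

/-- Influence of an arbitrary pinned vertex. -/
lemma influence_root {A : (V → Bool) → ℝ} (hA : ∀ σ, 0 < A σ) {β : ℝ} (hβ : 0 < β)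
    {N : V → Finset V} (hflip : ∀ σ v, A (Function.update σ v true) =
      A (Function.update σ v false) * ∏ u ∈ N v, tiltFactor β (σ u))
    (hirr : ∀ v, v ∉ N v) (hsymm : ∀ u v, u ∈ N v → v ∈ N u)
    {D : ℕ} (hD : 1 ≤ D) (hdeg : ∀ v, (N v).card ≤ D + 1) {δ : ℝ} (hδ : 0 < δ)
    (hθ : D * (|β - 1| / (β + 1)) ≤ 1 - δ) {κ : ℝ} (hκ : 0 ≤ κ) (S : Finset V)
    {h : V → Bool → ℝ} (hh : Admissible h) {v : V} (hvS : v ∉ S)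
    (hS : ∀ w ∉ S, w ≠ v → Pinned h w) {f : (V → Bool) → ℝ} (hf : SpinLip κ f) :
    |gibbsMean A (Function.update h v (ptMass true)) f -
      gibbsMean A (Function.update h v (ptMass false)) f| ≤ 2 / δ * κ := by
  refine (influence_step hA hβ hflip S hh (hirr v) hS (B := κ / δ) ?_ hf).trans ?_
  · intro u hu huS h' hh' hS' g hg
    refine influence hA hβ hflip hirr hsymm hdeg hδ hθ hκ (S.erase u) h' hh' u
      (Finset.notMem_erase u S) ?_ ?_ g hg
    · intro w hw hwu
      exact hS' w fun hwS => hw (Finset.mem_erase.2 ⟨hwu, hwS⟩)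
    · have hsub : N u ∩ S.erase u ⊆ (N u).erase v := by
        intro w hw
        rw [Finset.mem_inter, Finset.mem_erase] at hw
        exact Finset.mem_erase.2 ⟨fun e => hvS (e ▸ hw.2.2), hw.1⟩
      have h1 := Finset.card_le_card hsub
      rw [Finset.card_erase_of_mem (hsymm u v hu)] at h1
      have := hdeg u
      omega
  · have hc : ((N v ∩ S).card : ℝ) ≤ 2 * D := by
      have h1 := (Finset.card_le_card (Finset.inter_subset_left (s₁ := N v) (s₂ := S))).trans
        (hdeg v)
      have h2 : (N v ∩ S).card ≤ 2 * D := by omega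
      exact_mod_cast h2
    have h0 : 0 ≤ |β - 1| / (β + 1) := by positivity
    have h1 : ((N v ∩ S).card : ℝ) * (|β - 1| / (β + 1)) ≤ 2 * (1 - δ) := by
      have := mul_le_mul_of_nonneg_right hc h0
      linarith
    have h2 : 0 ≤ κ / δ := by positivity
    calc κ + ((N v ∩ S).card : ℝ) * (|β - 1| / (β + 1) * (κ / δ))
        = κ + ((N v ∩ S).card : ℝ) * (|β - 1| / (β + 1)) * (κ / δ) := by ring
      _ ≤ κ + 2 * (1 - δ) * (κ / δ) := by
        have := mul_le_mul_of_nonneg_right h1 h2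
        linarith
      _ = 2 / δ * κ - κ := by field_simp; ring
      _ ≤ _ := by linarith

/-! ### Moment generating function -/

/-- A weak form of Hoeffding's lemma for two-point distributions, by symmetrization: if `X'` is an
independent copy of `X`, then `E exp (X - E X) ≤ E exp (X - X') ≤ cosh (x - y)`. -/
lemma two_point_mgf_s7 {p x y : ℝ} (h0 : 0 ≤ p) (h1 : p ≤ 1) :
    p * Real.exp x + (1 - p) * Real.exp y ≤
      Real.exp (p * x + (1 - p) * y + (x - y) ^ 2 / 2) := by
  have q0 : 0 ≤ 1 - p := by linarith
  have J : Real.exp (-(p * x + (1 - p) * y)) ≤ p * Real.exp (-x) + (1 - p) * Real.exp (-y) := by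
    have := convexOn_exp.2 (Set.mem_univ (-x)) (Set.mem_univ (-y)) h0 q0 (by ring)
    simp only [smul_eq_mul] at this
    refine le_trans (le_of_eq ?_) this
    congr 1; ring
  have hpos : 0 ≤ p * Real.exp x + (1 - p) * Real.exp y := by positivity
  have K : (p * Real.exp x + (1 - p) * Real.exp y) * Real.exp (-(p * x + (1 - p) * y)) ≤
      Real.exp ((x - y) ^ 2 / 2) := by
    refine (mul_le_mul_of_nonneg_left J hpos).trans ?_
    refine le_trans ?_ (Real.cosh_le_exp_half_sq (x - y))
    have ex : Real.exp x * Real.exp (-x) = 1 := by rw [← Real.exp_add]; simp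
    have ey : Real.exp y * Real.exp (-y) = 1 := by rw [← Real.exp_add]; simp
    have c : Real.exp x * Real.exp (-y) + Real.exp y * Real.exp (-x) = 2 * Real.cosh (x - y) := by
      rw [← Real.exp_add, ← Real.exp_add, Real.cosh_eq]
      ring_nf
    have c1 := Real.one_le_cosh (x - y)
    have e : (p * Real.exp x + (1 - p) * Real.exp y) *
        (p * Real.exp (-x) + (1 - p) * Real.exp (-y)) =
        p ^ 2 * (Real.exp x * Real.exp (-x)) + (1 - p) ^ 2 * (Real.exp y * Real.exp (-y)) +
        p * (1 - p) * (Real.exp x * Real.exp (-y) + Real.exp y * Real.exp (-x)) := by ring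
    rw [e, ex, ey, c]
    nlinarith [mul_nonneg h0 q0]
  rw [Real.exp_neg, ← div_eq_mul_inv, div_le_iff₀ (Real.exp_pos _), ← Real.exp_add] at K
  refine K.trans (le_of_eq ?_)
  congr 1; ring

/-- If all vertices are pinned, the Gibbs distribution is a point mass. -/
lemma gibbsMean_of_pinned {A : (V → Bool) → ℝ} (hA : ∀ σ, 0 < A σ) {h : V → Bool → ℝ}
    (hh : Admissible h) (hp : ∀ w, Pinned h w) : ∃ τ, ∀ f, gibbsMean A h f = f τ := by
  choose τ hτ using hh.2
  refine ⟨τ, fun f => ?_⟩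
  have key : ∀ f : (V → Bool) → ℝ, gibbsSum A h f = (∏ v, h v (τ v)) * A τ * f τ := by
    intro f
    unfold gibbsSum
    refine Finset.sum_eq_single τ (fun σ _ hσ => ?_) (by simp)
    obtain ⟨v, hv⟩ := Function.ne_iff.1 hσ
    have hz : h v (σ v) = 0 := by
      have h1 := hτ v
      have h2 := hp v
      unfold Pinned at h2
      revert h1 h2 hv
      cases σ v <;> cases τ v <;> simp <;> intro h1 h2 <;>
        first | exact h2.resolve_left h1.ne' | exact h2.resolve_right h1.ne'
    rw [Finset.prod_eq_zero (mem_univ v) hz]; simp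
  unfold gibbsMean
  rw [key f, key]
  have h1 := Finset.prod_pos (s := univ) fun v _ => hτ v
  have h2 := hA τ
  field_simp

/-- Sub-Gaussian bound for the moment generating function, by induction on the set `S` of free
vertices: pinning one more vertex costs a factor `exp (s² (2 κ / δ)² / 2)`. -/
lemma mgf_bound {A : (V → Bool) → ℝ} (hA : ∀ σ, 0 < A σ) {β : ℝ} (hβ : 0 < β)
    {N : V → Finset V} (hflip : ∀ σ v, A (Function.update σ v true) =
      A (Function.update σ v false) * ∏ u ∈ N v, tiltFactor β (σ u))
    (hirr : ∀ v, v ∉ N v) (hsymm : ∀ u v, u ∈ N v → v ∈ N u)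
    {D : ℕ} (hD : 1 ≤ D) (hdeg : ∀ v, (N v).card ≤ D + 1) {δ : ℝ} (hδ : 0 < δ)
    (hθ : D * (|β - 1| / (β + 1)) ≤ 1 - δ) {κ : ℝ} (hκ : 0 ≤ κ) {f : (V → Bool) → ℝ}
    (hf : SpinLip κ f) (s : ℝ) (S : Finset V) :
    ∀ h : V → Bool → ℝ, Admissible h → (∀ w ∉ S, Pinned h w) →
      gibbsMean A h (fun σ => Real.exp (s * f σ)) ≤
        Real.exp (s * gibbsMean A h f + s ^ 2 * (2 / δ * κ) ^ 2 * S.card / 2) := by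
  induction S using Finset.induction_on with
  | empty =>
    intro h hh hp
    obtain ⟨τ, hτ⟩ := gibbsMean_of_pinned hA hh fun w => hp w (Finset.notMem_empty w)
    rw [hτ, hτ]; simp
  | insert v S hv ih =>
    intro h hh hp
    have hp' : ∀ w ∉ S, w ≠ v → Pinned h w := fun w hw hwv =>
      hp w (by simp [hw, hwv])
    have hpin : ∀ b, ∀ w ∉ S, Pinned (Function.update h v (ptMass b)) w := by
      intro b w hw
      by_cases e : w = v
      · subst e; exact pinned_pin _ _ _
      · exact (pinned_update_of_ne _ e).2 (hp' w hw e)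
    have i1 := ih _ (hh.pin v true) (hpin true)
    have i2 := ih _ (hh.pin v false) (hpin false)
    have infl := influence_root hA hβ hflip hirr hsymm hD hdeg hδ hθ hκ S hh hv hp' hf
    obtain ⟨p, p0, p1, hmix⟩ := gibbsMean_mix hA hh v
    rw [hmix, hmix f]
    generalize gibbsMean A (Function.update h v (ptMass true)) f = m1 at *
    generalize gibbsMean A (Function.update h v (ptMass false)) f = m2 at *
    rw [Finset.card_insert_of_notMem hv]
    rw [Real.exp_add] at i1 i2
    set E := Real.exp (s ^ 2 * (2 / δ * κ) ^ 2 * S.card / 2) with hE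
    have E0 : 0 < E := Real.exp_pos _
    have T := two_point_mgf_s7 (x := s * m1) (y := s * m2) p0 p1
    have sq : (s * m1 - s * m2) ^ 2 ≤ s ^ 2 * (2 / δ * κ) ^ 2 := by
      rw [← mul_sub, mul_pow]
      refine mul_le_mul_of_nonneg_left ?_ (sq_nonneg s)
      rw [← sq_abs]
      exact pow_le_pow_left₀ (abs_nonneg _) infl 2
    calc _ ≤ p * (Real.exp (s * m1) * E) + (1 - p) * (Real.exp (s * m2) * E) :=
          add_le_add (mul_le_mul_of_nonneg_left i1 p0)
            (mul_le_mul_of_nonneg_left i2 (by linarith))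
      _ = (p * Real.exp (s * m1) + (1 - p) * Real.exp (s * m2)) * E := by ring
      _ ≤ _ := mul_le_mul_of_nonneg_right T E0.le
      _ ≤ _ := by
        rw [hE, ← Real.exp_add, Real.exp_le_exp]
        push_cast
        linarith

/-! ### The Ising model -/

/-- The edge interaction of the Ising model, written over ordered pairs as in `isingWeight`. -/
def isingInteraction (G : SimpleGraph V) (β : ℝ) (σ : V → Bool) : ℝ :=
  ∏ u : V, ∏ w : V, (if G.Adj u w ∧ σ u = σ w then Real.sqrt β else 1)

/-- The uniform external field `lam`. -/
def isingField (V : Type*) (lam : ℝ) (_ : V) (b : Bool) : ℝ := if b = true then lam else 1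

lemma isingInteraction_pos (G : SimpleGraph V) {β : ℝ} (hβ : 0 < β) (σ : V → Bool) :
    0 < isingInteraction G β σ := by
  unfold isingInteraction
  refine Finset.prod_pos fun u _ => Finset.prod_pos fun w _ => ?_
  have := Real.sqrt_pos.2 hβ
  split_ifs <;> positivity

lemma isingWeight_eq (G : SimpleGraph V) (β lam : ℝ) (σ : V → Bool) :
    isingWeight G β lam σ = (∏ v, isingField V lam v (σ v)) * isingInteraction G β σ := by
  unfold isingWeight isingInteraction isingField
  congr 1
  rw [Finset.prod_ite]
  simp

lemma isingInteraction_flip (G : SimpleGraph V) [DecidableRel G.Adj] {β : ℝ} (hβ : 0 < β)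
    (σ : V → Bool) (v : V) :
    isingInteraction G β (Function.update σ v true) =
      isingInteraction G β (Function.update σ v false) *
        ∏ u ∈ G.neighborFinset v, tiltFactor β (σ u) := by
  have hs := Real.sqrt_pos.2 hβ
  have hss : Real.sqrt β * Real.sqrt β = β := Real.mul_self_sqrt hβ.le
  -- each edge at `v` occurs as two ordered pairs, and each contributes a factor `q`
  set q : Bool → ℝ := tiltFactor (Real.sqrt β) with hq
  have hqq : ∀ b, q b * q b = tiltFactor β b := by
    intro b; cases b
    · simp only [hq, tiltFactor]; simp [← mul_inv, hss]
    · simp [hq, tiltFactor, hss]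
  have hterm : ∀ u w : V,
      (if G.Adj u w ∧ Function.update σ v true u = Function.update σ v true w
        then Real.sqrt β else 1) =
      (if G.Adj u w ∧ Function.update σ v false u = Function.update σ v false w
        then Real.sqrt β else 1) *
      ((if u = v then (if G.Adj v w then q (σ w) else 1) else 1) *
       (if w = v then (if G.Adj v u then q (σ u) else 1) else 1)) := by
    intro u w
    by_cases hu : u = v
    · subst hu
      by_cases hw : w = u
      · subst hw; simp
      · by_cases ha : G.Adj u w
        · cases hb : σ w <;> simp [hw, ha, hb, hq, tiltFactor, hs.ne']
        · simp [hw, ha]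
    · by_cases hw : w = v
      · subst hw
        by_cases ha : G.Adj w u
        · cases hb : σ u <;> simp [hu, ha, ha.symm, hb, hq, tiltFactor, hs.ne']
        · have ha' : ¬ G.Adj u w := fun h => ha h.symm
          simp [hu, ha, ha']
      · simp [hu, hw]
  have hprod : isingInteraction G β (Function.update σ v true) =
      isingInteraction G β (Function.update σ v false) *
      ((∏ u : V, ∏ w : V, (if u = v then (if G.Adj v w then q (σ w) else 1) else 1)) *
       ∏ u : V, ∏ w : V, (if w = v then (if G.Adj v u then q (σ u) else 1) else 1)) := by
    unfold isingInteraction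
    simp_rw [← Finset.prod_mul_distrib]
    refine Finset.prod_congr rfl fun u _ => Finset.prod_congr rfl fun w _ => ?_
    convert hterm u w
  rw [hprod]
  congr 1
  have e1 : ∏ u : V, ∏ w : V, (if u = v then (if G.Adj v w then q (σ w) else 1) else 1) =
      ∏ w : V, if G.Adj v w then q (σ w) else 1 := by
    rw [Finset.prod_eq_single v (by intro u _ hu; simp [hu]) (by simp)]
    simp
  have e2 : ∏ u : V, ∏ w : V, (if w = v then (if G.Adj v u then q (σ u) else 1) else 1) =
      ∏ w : V, if G.Adj v w then q (σ w) else 1 := by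
    refine Finset.prod_congr rfl fun u _ => ?_
    rw [Finset.prod_eq_single v (by intro w _ hw; simp [hw]) (by simp)]
    simp
  have e3 : ∏ u ∈ G.neighborFinset v, tiltFactor β (σ u) =
      ∏ w : V, if G.Adj v w then tiltFactor β (σ w) else 1 := by
    rw [← Finset.prod_filter]
    refine Finset.prod_congr ?_ fun _ _ => rfl
    ext w; simp
  rw [e1, e2, e3, ← Finset.prod_mul_distrib]
  refine Finset.prod_congr rfl fun w _ => ?_
  split_ifs
  · exact hqq _
  · simp

lemma expect_isingModel (G : SimpleGraph V) (β lam : ℝ) (f : (V → Bool) → ℝ) :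
    expect (isingModel G β lam) f =
      gibbsMean (isingInteraction G β) (isingField V lam) f := by
  unfold _root_.expect isingModel gibbsMean gibbsSum
  simp_rw [isingWeight_eq, mul_one]
  rw [Finset.sum_div]
  refine Finset.sum_congr rfl fun σ _ => ?_
  ring

/-- The interval assumed for `β` amounts to the bound `(Δ - 1) |β - 1| / (β + 1) ≤ 1 - δ`. -/
lemma uniqueness_theta {δ β d : ℝ} (hd : 3 ≤ d) (h0 : 0 < δ) (h1 : δ < 1)
    (hl : (d - 2 + δ) / (d - δ) ≤ β) (hu : β ≤ (d - δ) / (d - 2 + δ)) :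
    0 < β ∧ (d - 1) * (|β - 1| / (β + 1)) ≤ 1 - δ := by
  have p1 : 0 < d - δ := by linarith
  have p2 : 0 < d - 2 + δ := by linarith
  have hβ : 0 < β := lt_of_lt_of_le (by positivity) hl
  refine ⟨hβ, ?_⟩
  rw [div_le_iff₀ p1] at hl
  rw [le_div_iff₀ p2] at hu
  rw [← mul_div_assoc, div_le_iff₀ (by linarith)]
  rcases abs_cases (β - 1) with ⟨e, _⟩ | ⟨e, _⟩ <;> rw [e] <;> nlinarith

/-- Sub-Gaussian concentration of Lipschitz functions for the
`δ`-unique Ising model. -/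
theorem ising_lipschitz_concentration :
    ∀ δ : ℝ, δ ∈ Set.Ioo (0 : ℝ) 1 →
    ∃ c : ℝ, 0 < c ∧
      ∀ (V : Type) [Fintype V] [DecidableEq V] (G : SimpleGraph V)
        [DecidableRel G.Adj] (Δ : ℕ), 3 ≤ Δ →
        (∀ v : V, G.degree v ≤ Δ) →
        ∀ β lam : ℝ,
          ((Δ : ℝ) - 2 + δ) / ((Δ : ℝ) - δ) ≤ β →
          β ≤ ((Δ : ℝ) - δ) / ((Δ : ℝ) - 2 + δ) →
          0 < lam →
          ∀ (κ : ℝ) (f : (V → Bool) → ℝ), 0 < κ →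
            (∀ (σ : V → Bool) (v : V), |f (Function.update σ v (!σ v)) - f σ| ≤ κ) →
            ∀ t : ℝ, 0 ≤ t →
              ∑ σ ∈ univ.filter
                  (fun σ : V → Bool =>
                    expect (isingModel G β lam) f + t < f σ),
                  isingModel G β lam σ ≤
                Real.exp (-(c * t ^ 2) / (κ ^ 2 * Fintype.card V)) := by
  rintro δ ⟨h0, h1⟩
  refine ⟨δ ^ 2 / 8, by positivity, ?_⟩
  intro V _ _ G _ Δ hΔ hdeg β lam hl hu hlam κ f hκ hf t ht
  have hΔ' : (3 : ℝ) ≤ Δ := by exact_mod_cast hΔ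
  obtain ⟨hβ, hθ⟩ := uniqueness_theta hΔ' h0 h1 hl hu
  obtain ⟨D, rfl⟩ : ∃ D, Δ = D + 1 := ⟨Δ - 1, by omega⟩
  have hθ' : (D : ℝ) * (|β - 1| / (β + 1)) ≤ 1 - δ := by
    push_cast at hθ
    rwa [add_sub_cancel_right] at hθ
  have hadm : Admissible (isingField V lam) := by
    constructor
    · intro v b; unfold isingField; split_ifs <;> linarith
    · intro v; exact ⟨true, by simpa [isingField] using hlam⟩
  have hA := isingInteraction_pos G hβ
  -- for an empty vertex set `L = 0`, `s = 0`, and both sides below degenerate to `1`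
  set L : ℝ := (2 / δ * κ) ^ 2 * Fintype.card V with hL
  set s : ℝ := t / L with hs
  have hL0 : 0 ≤ L := by positivity
  have hs0 : 0 ≤ s := by positivity
  have hM := mgf_bound hA hβ (N := fun v => G.neighborFinset v) (isingInteraction_flip G hβ)
    (by simp) (by intro u v; simp [G.adj_comm]) (D := D) (by omega)
    (fun v => by rw [G.card_neighborFinset_eq_degree]; exact hdeg v) h0 hθ' hκ.le hf s univ
    (isingField V lam) hadm (by simp)
  rw [← expect_isingModel, ← expect_isingModel] at hM
  set m := expect (isingModel G β lam) f with hm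
  have hμ : ∀ σ, 0 ≤ isingModel G β lam σ := by
    have hw : ∀ σ, 0 ≤ isingWeight G β lam σ := fun σ => by
      rw [isingWeight_eq]
      exact mul_nonneg (Finset.prod_nonneg fun v _ => hadm.1 v _) (hA σ).le
    intro σ
    exact div_nonneg (hw σ) (Finset.sum_nonneg fun τ _ => hw τ)
  have hMarkov : ∑ σ ∈ univ.filter (fun σ : V → Bool => m + t < f σ), isingModel G β lam σ ≤
      Real.exp (-(s * (m + t))) *
        expect (isingModel G β lam) (fun σ => Real.exp (s * f σ)) := by
    unfold _root_.expect
    rw [Finset.mul_sum]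
    refine le_trans (Finset.sum_le_sum (g := fun σ => Real.exp (-(s * (m + t))) *
      (isingModel G β lam σ * Real.exp (s * f σ))) fun σ hσ => ?_)
      (Finset.sum_le_sum_of_subset_of_nonneg (Finset.filter_subset _ _) fun σ _ _ => ?_)
    · have hlt := (Finset.mem_filter.1 hσ).2
      have : 1 ≤ Real.exp (-(s * (m + t))) * Real.exp (s * f σ) := by
        rw [← Real.exp_add]
        refine Real.one_le_exp ?_
        have := mul_le_mul_of_nonneg_left hlt.le hs0
        linarith
      nlinarith [hμ σ]
    · have := hμ σ
      positivity
  refine hMarkov.trans ((mul_le_mul_of_nonneg_left hM (Real.exp_pos _).le).trans ?_)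
  rw [← Real.exp_add, Real.exp_le_exp, Finset.card_univ]
  have e1 : s ^ 2 * (2 / δ * κ) ^ 2 * (Fintype.card V : ℝ) / 2 = s * (s * L) / 2 := by
    rw [hL]; ring
  have e2 : s * (s * L) = s * t := by
    rcases eq_or_ne L 0 with h | h
    · simp [hs, h]
    · rw [hs, div_mul_cancel₀ t h]
  have e3 : -(δ ^ 2 / 8 * t ^ 2) / (κ ^ 2 * (Fintype.card V : ℝ)) = -(s * t) / 2 := by
    rw [hs, hL]
    rcases eq_or_ne (Fintype.card V : ℝ) 0 with h | h
    · simp [h]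
    · field_simp
      ring
  rw [e1, e2, e3]
  linarith
end
end

section
/- Let 0 < β ≤ γ with β·γ < 1, let δ ∈ (0,1), and set \bar{Δ} = (1+√(βγ))/(1−√(βγ)). Let d ≥ 1 be an integer with d ≥ (1−δ)·\bar{Δ}, and define ζ = d(1−βγ) − (1−δ)(1+βγ), x = (ζ − √(ζ² − 4(1−δ)²βγ))/(2(1−δ)β), and λ₁ = x·((x+γ)/(βx+1))^d. Then: (a) (1−δ)·γ^{d+1}/ζ ≤ λ₁ ≤ (2(1−δ)·γ^{d+1}/ζ)·((d+1−δ)/(d−1+δ))^d; (b) if in addition d ≥ 2, then λ₁ ≤ 9·γ^{d+1}/√(βγ); and (c) if in addition d ≥ 2 and β·γ ≥ Δ/(Δ+α) for some real α > 0 and some integer Δ ≥ d+1, then (1−δ)/(α·e^{α}) ≤ β^{d+1}·λ₁ ≤ λ₁/γ^{d+1} ≤ 9·√(1+α). -/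
/-!
Write `b = βγ`, `c = 1 - δ` and `x = γ t`. Then `t` is the smaller root of `c b t² - ζ t + c = 0`,
and `λ₁ = γ ^ (d + 1) * t * ((1 + t) / (1 + b t)) ^ d`. The product of the two roots is `1 / b`, so
`b t² ≤ 1`, and the equation `ζ t = c (1 + b t²)` gives `c / ζ ≤ t ≤ 2 c / ζ`.
Substituting the definition of `ζ`, the same equation reads `d (1 - b) t = c (1 + t) (1 + b t)`,
which together with `b t² ≤ 1` yields `1 ≤ (1 + t) / (1 + b t) ≤ (d + c) / (d - c)`. This is (a).

For (b), use `t ≤ 1 / √b` and `((d + 1) / (d - 1)) ^ d ≤ 9` for `d ≥ 2`: the left side is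
nonincreasing in `d` and equals `9` at `d = 2`. For (c), the hypothesis on `b` gives
`ζ ≤ d (1 - b) ≤ α`, `b ^ (d + 1) ≥ (1 + α / Δ) ^ (-Δ) ≥ exp (-α)` and `1 / b ≤ 1 + α`.
-/

/-- Bernoulli's inequality with the quadratic term. -/
lemma one_add_pow_ge_quadratic (h : ℝ) (hh : 0 ≤ h) (n : ℕ) :
    1 + n * h + n * (n - 1) / 2 * h ^ 2 ≤ (1 + h) ^ n := by
  induction n with
  | zero => simp
  | succ n ih =>
    have h1 := mul_le_mul_of_nonneg_right ih (by linarith : 0 ≤ 1 + h)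
    have h2 : 0 ≤ (n : ℝ) * (n - 1) / 2 * h ^ 3 := by
      rcases Nat.eq_zero_or_pos n with rfl | hn
      · simp
      · have : (1 : ℝ) ≤ n := by exact_mod_cast hn
        have : (0 : ℝ) ≤ n - 1 := by linarith
        positivity
    rw [pow_succ (1 + h) n]
    push_cast
    nlinarith

/-- The sequence `((d + 1) / (d - 1)) ^ d`, `d ≥ 2`, is at most its value `9` at `d = 2`
(the index is `n = d - 2`). It is nonincreasing, because the ratio of consecutive bases is `1 + h`
with `h = 2 / ((d + 2) (d - 1))`, and `(1 + h) ^ d ≥ (d + 2) / d`. -/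
lemma ratio_pow_le_nine (n : ℕ) :
    (((n : ℝ) + 3) / ((n : ℝ) + 1)) ^ (n + 2) ≤ 9 := by
  induction n with
  | zero => norm_num
  | succ n ih =>
    refine le_trans ?_ ih
    have hn : (0 : ℝ) ≤ n := Nat.cast_nonneg n
    set h : ℝ := 2 / (((n : ℝ) + 4) * ((n : ℝ) + 1)) with hh
    have hB := one_add_pow_ge_quadratic h (by positivity) (n + 2)
    -- The linear Bernoulli bound is too weak here for `d > 2`; the quadratic term suffices.
    have hq : ((n : ℝ) + 4) / (n + 2) ≤ (1 + h) ^ (n + 2) := by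
      refine le_trans ?_ hB
      push_cast
      rw [hh, div_le_iff₀ (by positivity)]
      have e : (1 + ((n : ℝ) + 2) * (2 / (((n : ℝ) + 4) * ((n : ℝ) + 1)))
          + ((n : ℝ) + 2) * ((n : ℝ) + 2 - 1) / 2 * (2 / (((n : ℝ) + 4) * ((n : ℝ) + 1))) ^ 2)
          * ((n : ℝ) + 2) - (n + 4) = 8 / (((n : ℝ) + 4) ^ 2 * ((n : ℝ) + 1)) := by
        field_simp
        ring
      have : 0 ≤ 8 / (((n : ℝ) + 4) ^ 2 * ((n : ℝ) + 1)) := by positivity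
      linarith
    have hbase : ((n : ℝ) + 3) / (n + 1) = ((n : ℝ) + 4) / (n + 2) * (1 + h) := by
      rw [hh]
      field_simp
      ring
    rw [hbase, mul_pow]
    push_cast
    have e1 : ((n : ℝ) + 1 + 3) / (n + 1 + 1) = ((n : ℝ) + 4) / (n + 2) := by
      congr 1 <;> ring
    rw [e1, show n + 1 + 2 = (n + 2) + 1 by ring, pow_succ]
    exact mul_le_mul_of_nonneg_left hq (by positivity)

/-- The bound `2 c √b ≤ ζ` makes the discriminant of `c b t² - ζ t + c` nonnegative; the smaller
root is positive, and it satisfies `b t² ≤ 1` because the product of the roots is `1 / b`. -/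
lemma smaller_root (b c ζ : ℝ) (hb : 0 < b) (hc : 0 < c) (hζ : 2 * c * √b ≤ ζ) :
    let t := (ζ - √(ζ ^ 2 - 4 * c ^ 2 * b)) / (2 * c * b)
    0 < t ∧ b * t ^ 2 ≤ 1 ∧ ζ * t = c * (1 + b * t ^ 2) := by
  intro t
  have hs : 0 < √b := Real.sqrt_pos.2 hb
  have hsq : √b ^ 2 = b := Real.sq_sqrt hb.le
  have hζ0 : 0 < ζ := lt_of_lt_of_le (by positivity) hζ
  have hD : 0 ≤ ζ ^ 2 - 4 * c ^ 2 * b := by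
    have := pow_le_pow_left₀ (by positivity) hζ 2
    rw [mul_pow, hsq] at this
    linarith
  have hR := Real.sq_sqrt hD
  have hR0 := Real.sqrt_nonneg (ζ ^ 2 - 4 * c ^ 2 * b)
  have htd : t = (ζ - √(ζ ^ 2 - 4 * c ^ 2 * b)) / (2 * c * b) := rfl
  set R := √(ζ ^ 2 - 4 * c ^ 2 * b)
  have hcb : 0 < 4 * c ^ 2 * b := by positivity
  have hRlt : R < ζ := by nlinarith
  have ht : 0 < t := div_pos (by linarith) (by positivity)
  have hR' : R = ζ - 2 * c * b * t := by
    rw [htd]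
    field_simp
    ring
  have heq : ζ * t = c * (1 + b * t ^ 2) := by
    have h4 : (4 * c * b) * (ζ * t) = (4 * c * b) * (c * (1 + b * t ^ 2)) := by
      rw [hR'] at hR
      linarith
    exact mul_left_cancel₀ (by positivity) h4
  refine ⟨ht, ?_, heq⟩
  have h1 : 2 * c * b * t ≤ ζ := by linarith
  have h2 := mul_le_mul_of_nonneg_right h1 ht.le
  nlinarith

/-- Bounds on the critical external field `λ₁ = λ_{1,δ}(d)` for
antiferromagnetic two-spin systems with gap-`δ` uniqueness. -/
theorem critical_field_bounds (β γ δ : ℝ) (d : ℕ)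
    (hβ : 0 < β) (hβγ : β ≤ γ) (hprod : β * γ < 1)
    (hδ : δ ∈ Set.Ioo (0 : ℝ) 1) (hd : 1 ≤ d)
    (hdbar : (1 - δ) * ((1 + Real.sqrt (β * γ)) / (1 - Real.sqrt (β * γ))) ≤ (d : ℝ))
    (ζ x lam₁ : ℝ)
    (hζ : ζ = (d : ℝ) * (1 - β * γ) - (1 - δ) * (1 + β * γ))
    (hx : x = (ζ - Real.sqrt (ζ ^ 2 - 4 * (1 - δ) ^ 2 * (β * γ))) / (2 * (1 - δ) * β))
    (hlam : lam₁ = x * ((x + γ) / (β * x + 1)) ^ d) :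
    ((1 - δ) * γ ^ (d + 1) / ζ ≤ lam₁ ∧
      lam₁ ≤ 2 * (1 - δ) * γ ^ (d + 1) / ζ *
        (((d : ℝ) + 1 - δ) / ((d : ℝ) - 1 + δ)) ^ d) ∧
    (2 ≤ d → lam₁ ≤ 9 * γ ^ (d + 1) / Real.sqrt (β * γ)) ∧
    (∀ (α : ℝ) (Δ : ℕ), 0 < α → d + 1 ≤ Δ → (Δ : ℝ) / ((Δ : ℝ) + α) ≤ β * γ →
      2 ≤ d →
      (1 - δ) / (α * Real.exp α) ≤ β ^ (d + 1) * lam₁ ∧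
      β ^ (d + 1) * lam₁ ≤ lam₁ / γ ^ (d + 1) ∧
      lam₁ / γ ^ (d + 1) ≤ 9 * Real.sqrt (1 + α)) := by
  obtain ⟨hδ0, hδ1⟩ := hδ
  obtain ⟨c, hcdef⟩ : ∃ c, c = 1 - δ := ⟨_, rfl⟩
  have hc : 0 < c := by linarith
  have hc1 : c < 1 := by linarith
  have hγ : 0 < γ := lt_of_lt_of_le hβ hβγ
  obtain ⟨b, hbdef⟩ : ∃ b, b = β * γ := ⟨_, rfl⟩
  have hb : 0 < b := by rw [hbdef]; positivity
  rw [show (d : ℝ) + 1 - δ = d + c by rw [hcdef]; ring,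
    show (d : ℝ) - 1 + δ = d - c by rw [hcdef]; ring]
  simp only [← hcdef, ← hbdef] at hprod hdbar hζ hx ⊢
  have hd1 : (1 : ℝ) ≤ d := by exact_mod_cast hd
  have hs : 0 < √b := Real.sqrt_pos.2 hb
  have hsq : √b ^ 2 = b := Real.sq_sqrt hb.le
  have hs1 : √b < 1 := by nlinarith
  -- Multiply `c (1 + √b) ≤ d (1 - √b)` by `1 + √b` and insert the definition of `ζ`.
  have hζ2 : 2 * c * √b ≤ ζ := by
    rw [← mul_div_assoc, div_le_iff₀ (by linarith)] at hdbar
    have := mul_le_mul_of_nonneg_right hdbar (by linarith : 0 ≤ 1 + √b)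
    nlinarith
  have hζ0 : 0 < ζ := lt_of_lt_of_le (by positivity) hζ2
  obtain ⟨ht, hbt, heq⟩ := smaller_root b c ζ hb hc hζ2
  obtain ⟨t, htdef⟩ : ∃ t, t = (ζ - √(ζ ^ 2 - 4 * c ^ 2 * b)) / (2 * c * b) := ⟨_, rfl⟩
  rw [← htdef] at ht hbt heq
  have hxt : x = γ * t := by
    rw [hx, htdef, hbdef]
    field_simp
  obtain ⟨q, hq⟩ : ∃ q, q = (1 + t) / (1 + b * t) := ⟨_, rfl⟩
  have hden : 0 < 1 + b * t := by positivity
  have hlamt : lam₁ = γ ^ (d + 1) * (t * q ^ d) := by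
    have : (x + γ) / (β * x + 1) = γ * q := by
      rw [hxt, hq, mul_div_assoc', show β * (γ * t) + 1 = 1 + b * t by rw [hbdef]; ring]
      congr 1
      ring
    rw [hlam, this, hxt, mul_pow]
    ring
  have hq1 : 1 ≤ q := by
    rw [hq, one_le_div hden]
    nlinarith
  have hq2 : q ≤ (d + c) / (d - c) := by
    rw [hq, div_le_div_iff₀ hden (by linarith)]
    have hfac : d * (1 - b) * t = c * (1 + t) * (1 + b * t) := by
      rw [hζ] at heq
      linarith
    nlinarith
  have htl : c / ζ ≤ t := by
    rw [div_le_iff₀ hζ0]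
    have : 0 ≤ c * (b * t ^ 2) := by positivity
    linarith
  have htu : t ≤ 2 * c / ζ := by
    rw [le_div_iff₀ hζ0]
    have := mul_le_mul_of_nonneg_left hbt hc.le
    linarith
  have hts : t ≤ 1 / √b := by
    rw [le_div_iff₀ hs]
    have : (t * √b) ^ 2 ≤ 1 := by
      rw [mul_pow, hsq]
      linarith
    exact (sq_le_one_iff₀ (by positivity)).1 this
  have hq0 : 0 ≤ q := by linarith
  have hγp : 0 < γ ^ (d + 1) := by positivity
  have hlow : c / ζ ≤ t * q ^ d :=
    htl.trans (le_mul_of_one_le_right ht.le (one_le_pow₀ hq1))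
  have hnine : 2 ≤ d → t * q ^ d ≤ 9 / √b := by
    intro h2
    obtain ⟨n, rfl⟩ := Nat.exists_eq_add_of_le' h2
    have hn := ratio_pow_le_nine n
    have hn0 : (0 : ℝ) ≤ n := Nat.cast_nonneg n
    have hq3 : q ≤ ((n : ℝ) + 3) / (n + 1) := by
      refine hq2.trans ?_
      push_cast at hd1 ⊢
      rw [div_le_div_iff₀ (by linarith) (by linarith)]
      nlinarith
    have hq9 : q ^ (n + 2) ≤ 9 := (pow_le_pow_left₀ hq0 hq3 _).trans hn
    calc t * q ^ (n + 2) ≤ 1 / √b * 9 := mul_le_mul hts hq9 (by positivity) (by positivity)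
      _ = 9 / √b := by ring
  refine ⟨⟨?_, ?_⟩, ?_, ?_⟩
  · calc c * γ ^ (d + 1) / ζ = γ ^ (d + 1) * (c / ζ) := by ring
      _ ≤ lam₁ := by rw [hlamt]; gcongr
  · calc lam₁ = γ ^ (d + 1) * (t * q ^ d) := hlamt
      _ ≤ γ ^ (d + 1) * (2 * c / ζ * ((d + c) / (d - c)) ^ d) := by gcongr
      _ = _ := by ring
  · intro h2
    calc lam₁ = γ ^ (d + 1) * (t * q ^ d) := hlamt
      _ ≤ γ ^ (d + 1) * (9 / √b) := by gcongr; exact hnine h2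
      _ = _ := by ring
  · intro α Δ hα hΔ hbΔ h2
    have hratio : lam₁ / γ ^ (d + 1) = t * q ^ d := by
      rw [hlamt]
      field_simp
    have hβlam : β ^ (d + 1) * lam₁ = b ^ (d + 1) * (t * q ^ d) := by
      rw [hlamt, hbdef, mul_pow]
      ring
    have hΔd : (d : ℝ) + 1 ≤ Δ := by exact_mod_cast hΔ
    have hΔ0 : (0 : ℝ) < Δ := by linarith
    rw [div_le_iff₀ (by positivity)] at hbΔ
    rw [hratio, hβlam]
    refine ⟨?_, ?_, ?_⟩
    · have hζα : ζ ≤ α := by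
        have h3 : Δ * (1 - b) ≤ α := by linarith [mul_le_mul_of_nonneg_right hprod.le hα.le]
        have h4 : d * (1 - b) ≤ Δ * (1 - b) :=
          mul_le_mul_of_nonneg_right (by linarith) (by linarith)
        have h5 : 0 < c * (1 + b) := by positivity
        linarith
      have hexp : 1 ≤ b ^ (d + 1) * Real.exp α := by
        have h6 : 1 ≤ b * Real.exp (α / Δ) := by
          have h7 : α / Δ + 1 ≤ Real.exp (α / Δ) := Real.add_one_le_exp _
          have h8 : 1 ≤ b * (α / Δ + 1) := by
            rw [div_add_one hΔ0.ne', mul_div_assoc', one_le_div hΔ0]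
            linarith
          exact h8.trans (mul_le_mul_of_nonneg_left h7 hb.le)
        have h9 : 1 ≤ b ^ Δ * Real.exp α := by
          have := one_le_pow₀ h6 (n := Δ)
          rwa [mul_pow, ← Real.exp_nat_mul, mul_div_cancel₀ _ hΔ0.ne'] at this
        refine h9.trans (mul_le_mul_of_nonneg_right ?_ (Real.exp_pos α).le)
        exact pow_le_pow_of_le_one hb.le hprod.le hΔ
      have h10 : c / α ≤ t * q ^ d := le_trans (by gcongr) hlow
      calc c / (α * Real.exp α) = 1 / Real.exp α * (c / α) := by field_simp
        _ ≤ b ^ (d + 1) * (t * q ^ d) := by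
          refine mul_le_mul ?_ h10 (by positivity) (by positivity)
          rwa [div_le_iff₀ (Real.exp_pos α)]
    · exact mul_le_of_le_one_left (by positivity) (pow_le_one₀ hb.le hprod.le)
    · refine (hnine h2).trans ?_
      rw [div_le_iff₀ hs, mul_assoc, ← Real.sqrt_mul (by positivity)]
      have h11 : 1 ≤ (1 + α) * b := by
        refine le_of_mul_le_mul_left ?_ hΔ0
        have h12 : 0 ≤ (Δ - 1) * (α * b) := mul_nonneg (by linarith) (by positivity)
        linarith
      have := Real.one_le_sqrt.2 h11
      linarith
end

section
/- Let G = (V,E) be a finite simple graph, let β > 0 and 0 < λ ≤ 1, and let μ be the Ising model on G with edge activity β and external field λ. Let R ∈ ℝ^{V×V} be the Dobrushin matrix of μ. Then for distinct i, j ∈ V: if i and j are not adjacent in G then R_{ij} = 0, and if i and j are adjacent then R_{ij} ≤ λ·|β² − 1|·max(β^{Δ_i − 2}, β^{−Δ_i}), where Δ_i is the degree of i in G. -/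
/-!
Fix the spins off `i`. Only the factors of the Ising weight that involve `i` depend on `σ i`
(`isingModel_update`), so the conditional probability of a plus at `i` is
`lam * β ^ p / (lam * β ^ p + β ^ m)`, where `p` and `m` count the plus and minus neighbours of `i`
(`condPlus_ising`). If `j` is not a neighbour of `i`, its spin does not enter. If it is, let `p`
and `m` count the neighbours other than `j`, so `p + m + 1 = deg i`. Flipping `j` compares
`x ↦ lam * x / (lam * x + 1)` at `x = β ^ (p + 1 - m)` and at `x = β ^ (p - m - 1)`. This map is
`lam`-Lipschitz on `x ≥ 0`, which gives the bound `lam * |β ^ 2 - 1| * β ^ (p - m - 1)`, and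
`-deg i ≤ p - m - 1 ≤ deg i - 2`.
-/

open Finset

noncomputable section
attribute [local instance] Classical.propDecidable

variable {V : Type*} [Fintype V] [DecidableEq V]

/-- Conditional probability that the spin at `i` is `+1`, given the configuration `σ`
at all other sites. -/
def condPlus (μ : (V → Bool) → ℝ) (i : V) (σ : V → Bool) : ℝ :=
  μ (Function.update σ i true) /
    (μ (Function.update σ i true) + μ (Function.update σ i false))

/-- Total variation distance between the conditional laws of the spin at `i` given
`σ_j = +1` resp. `σ_j = −1`, the configuration elsewhere being `σ`. -/
def tvCond (μ : (V → Bool) → ℝ) (i j : V) (σ : V → Bool) : ℝ :=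
  (|condPlus μ i (Function.update σ j true) -
      condPlus μ i (Function.update σ j false)| +
    |(1 - condPlus μ i (Function.update σ j true)) -
      (1 - condPlus μ i (Function.update σ j false))|) / 2

/-- Entry `R_{ij}` of the Dobrushin matrix: the worst-case influence of site `j`
on site `i`. -/
def dobrushin [Nonempty V] (μ : (V → Bool) → ℝ) (i j : V) : ℝ :=
  univ.sup' univ_nonempty (fun σ : V → Bool => tvCond μ i j σ)

lemma isingWeight_pos (G : SimpleGraph V) {β lam : ℝ} (hβ : 0 < β) (hlam : 0 < lam)
    (σ : V → Bool) : 0 < isingWeight G β lam σ := by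
  have h := Real.sqrt_pos.2 hβ
  refine mul_pos (pow_pos hlam _) (prod_pos fun u _ => prod_pos fun w _ => ?_)
  split_ifs <;> positivity

/-- Number of neighbours of `i` in `S` that carry the spin `s`. -/
def nbrCount (G : SimpleGraph V) (i : V) (S : Finset V) (s : Bool) (σ : V → Bool) : ℕ :=
  (S.filter fun w => G.Adj i w ∧ σ w = s).card

/-- The factors of the Ising weight that involve `i` are `lam` for a plus at `i` and `√β * √β` for
each neighbour agreeing with `i`; the others form the constant `C`. -/
lemma isingModel_update (G : SimpleGraph V) {β lam : ℝ} (hβ : 0 < β) (hlam : 0 < lam)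
    (i : V) (σ : V → Bool) :
    ∃ C : ℝ, 0 < C ∧ ∀ s : Bool, isingModel G β lam (Function.update σ i s) =
      C * ((if s = true then lam else 1) * β ^ nbrCount G i (univ.erase i) s σ) := by
  have hs := Real.sqrt_pos.2 hβ
  have hZ : 0 < ∑ τ : V → Bool, isingWeight G β lam τ :=
    sum_pos (fun τ _ => isingWeight_pos G hβ hlam τ) univ_nonempty
  refine ⟨lam ^ ((univ.erase i).filter fun v => σ v = true).card *
    (∏ u ∈ univ.erase i, ∏ w ∈ univ.erase i,
      (if G.Adj u w ∧ σ u = σ w then Real.sqrt β else 1)) /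
        ∑ τ : V → Bool, isingWeight G β lam τ, ?_, fun s => ?_⟩
  · refine div_pos (mul_pos (pow_pos hlam _) (prod_pos fun u _ => prod_pos fun w _ => ?_)) hZ
    split_ifs <;> positivity
  have hfield : lam ^ (univ.filter fun v => Function.update σ i s v = true).card =
      (if s = true then lam else 1) *
        lam ^ ((univ.erase i).filter fun v => σ v = true).card := by
    rw [← prod_const, ← prod_const, prod_filter, prod_filter,
      ← mul_prod_erase univ _ (mem_univ i)]
    congr 1
    · simp
    · refine prod_congr rfl fun w hw => ?_
      rw [Function.update_of_ne (ne_of_mem_erase hw)]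
  have hedge : (∏ u : V, ∏ w : V, (if G.Adj u w ∧
        Function.update σ i s u = Function.update σ i s w then Real.sqrt β else 1)) =
      β ^ nbrCount G i (univ.erase i) s σ * ∏ u ∈ univ.erase i, ∏ w ∈ univ.erase i,
        (if G.Adj u w ∧ σ u = σ w then Real.sqrt β else 1) := by
    rw [← mul_prod_erase univ _ (mem_univ i), ← mul_prod_erase univ _ (mem_univ i)]
    have hrest : ∀ u ∈ univ.erase i, (∏ w : V, (if G.Adj u w ∧
        Function.update σ i s u = Function.update σ i s w then Real.sqrt β else 1)) =
        (if G.Adj i u ∧ σ u = s then Real.sqrt β else 1) * ∏ w ∈ univ.erase i,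
          (if G.Adj u w ∧ σ u = σ w then Real.sqrt β else 1) := by
      intro u hu
      rw [← mul_prod_erase univ _ (mem_univ i)]
      congr 1
      · rw [Function.update_of_ne (ne_of_mem_erase hu), Function.update_self, G.adj_comm]
      · refine prod_congr rfl fun w hw => ?_
        rw [Function.update_of_ne (ne_of_mem_erase hu),
          Function.update_of_ne (ne_of_mem_erase hw)]
    have hrow : ∀ w ∈ univ.erase i, (if G.Adj i w ∧
        Function.update σ i s i = Function.update σ i s w then Real.sqrt β else 1) =
        (if G.Adj i w ∧ σ w = s then Real.sqrt β else 1) := by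
      intro w hw
      rw [Function.update_of_ne (ne_of_mem_erase hw), Function.update_self]
      simp only [eq_comm (a := s)]
    rw [prod_congr rfl hrest, prod_congr rfl hrow, prod_mul_distrib, ← mul_assoc]
    congr 1
    rw [if_neg (fun h => G.loopless.irrefl i h.1), one_mul, ← prod_mul_distrib, nbrCount,
      ← prod_const, prod_filter]
    refine prod_congr rfl fun w _ => ?_
    split_ifs
    · exact Real.mul_self_sqrt hβ.le
    · exact one_mul 1
  rw [isingModel, isingWeight, hfield, hedge]
  ring

lemma condPlus_ising (G : SimpleGraph V) {β lam : ℝ} (hβ : 0 < β) (hlam : 0 < lam)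
    (i : V) (σ : V → Bool) :
    condPlus (isingModel G β lam) i σ =
      lam * β ^ nbrCount G i (univ.erase i) true σ /
        (lam * β ^ nbrCount G i (univ.erase i) true σ +
          β ^ nbrCount G i (univ.erase i) false σ) := by
  obtain ⟨C, hC, h⟩ := isingModel_update G hβ hlam i σ
  rw [condPlus, h, h, ← mul_add, mul_div_mul_left _ _ hC.ne']
  simp

lemma nbrCount_update (G : SimpleGraph V) {i j : V} (hij : i ≠ j) (s b : Bool) (σ : V → Bool) :
    nbrCount G i (univ.erase i) s (Function.update σ j b) =
      (if G.Adj i j ∧ b = s then 1 else 0) + nbrCount G i ((univ.erase i).erase j) s σ := by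
  have hj : j ∈ univ.erase i := mem_erase.2 ⟨hij.symm, mem_univ j⟩
  rw [nbrCount, nbrCount, card_filter, card_filter, ← add_sum_erase _ _ hj,
    Function.update_self]
  congr 1
  refine sum_congr rfl fun w hw => ?_
  rw [Function.update_of_ne (ne_of_mem_erase hw)]

lemma nbrCount_add (G : SimpleGraph V) [DecidableRel G.Adj] {i j : V} (h : G.Adj i j)
    (σ : V → Bool) :
    nbrCount G i ((univ.erase i).erase j) true σ +
      nbrCount G i ((univ.erase i).erase j) false σ + 1 = G.degree i := by
  have hj : j ∈ G.neighborFinset i := by simpa using h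
  rw [← G.card_neighborFinset_eq_degree, ← card_erase_add_one hj, nbrCount, nbrCount,
    ← card_union_of_disjoint]
  · congr 2
    ext w
    have : G.Adj i w → w ≠ i := fun h => h.ne'
    cases hw : σ w <;> simp [hw] <;> tauto
  · rw [disjoint_left]
    intro w
    simp +contextual

lemma tvCond_eq (μ : (V → Bool) → ℝ) (i j : V) (σ : V → Bool) :
    tvCond μ i j σ = |condPlus μ i (Function.update σ j true) -
      condPlus μ i (Function.update σ j false)| := by
  rw [tvCond, sub_sub_sub_cancel_left,
    abs_sub_comm (condPlus μ i (Function.update σ j false))]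
  ring

/-- The influence of one neighbour, when `p` plus and `m` minus neighbours remain. -/
lemma influence_le {β lam : ℝ} (hβ : 0 < β) (hlam : 0 < lam) (p m : ℕ) :
    |lam * β ^ (1 + p) / (lam * β ^ (1 + p) + β ^ m) -
      lam * β ^ p / (lam * β ^ p + β ^ (1 + m))| ≤
      lam * |β ^ 2 - 1| * β ^ ((p : ℤ) - m - 1) := by
  have hp : 0 < β ^ p := pow_pos hβ p
  have hm : 0 < β ^ m := pow_pos hβ m
  have hz : β ^ ((p : ℤ) - m - 1) = β ^ p / (β ^ m * β) := by
    rw [zpow_sub₀ hβ.ne', zpow_sub₀ hβ.ne', zpow_natCast, zpow_natCast, zpow_one, div_div]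
  rw [hz, pow_add, pow_add, pow_one]
  generalize β ^ p = a at *
  generalize β ^ m = b at *
  have hd : lam * (β * a) / (lam * (β * a) + b) - lam * a / (lam * a + β * b) =
      lam * (β ^ 2 - 1) * (a * b / ((lam * (β * a) + b) * (lam * a + β * b))) := by
    field_simp
    ring
  rw [hd, abs_mul, abs_mul, abs_of_pos hlam, abs_of_pos (by positivity :
    0 < a * b / ((lam * (β * a) + b) * (lam * a + β * b)))]
  refine mul_le_mul_of_nonneg_left ?_ (by positivity)
  rw [div_le_div_iff₀ (by positivity) (by positivity)]
  have h1 : b * (β * b) ≤ (lam * (β * a) + b) * (lam * a + β * b) := by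
    gcongr <;> exact le_add_of_nonneg_left (by positivity)
  nlinarith [mul_le_mul_of_nonneg_left h1 hp.le]

/-- An integer power is at most the larger of those at the ends of an interval of exponents. -/
lemma zpow_le_max_of_mem {β : ℝ} (hβ : 0 < β) {x y z : ℤ} (hxy : x ≤ y) (hzx : z ≤ x) :
    β ^ x ≤ max (β ^ y) (β ^ z) := by
  rcases le_total 1 β with h | h
  · exact le_max_of_le_left (zpow_le_zpow_right₀ h hxy)
  · exact le_max_of_le_right (zpow_le_zpow_right_of_le_one₀ hβ h hzx)

/-- Bounds on the entries of the Dobrushin matrix of the Ising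
model with edge activity `β > 0` and external field `0 < λ ≤ 1`. -/
theorem ising_dobrushin_entries [Nonempty V]
    (G : SimpleGraph V) [DecidableRel G.Adj]
    (β lam : ℝ) (hβ : 0 < β) (hlam₀ : 0 < lam) (hlam₁ : lam ≤ 1)
    (i j : V) (hij : i ≠ j) :
    (¬ G.Adj i j → dobrushin (isingModel G β lam) i j = 0) ∧
    (G.Adj i j →
      dobrushin (isingModel G β lam) i j ≤
        lam * |β ^ 2 - 1| *
          max (β ^ ((G.degree i : ℤ) - 2)) (β ^ (-(G.degree i : ℤ)))) := by
  constructor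
  · intro h
    have h0 : ∀ σ, tvCond (isingModel G β lam) i j σ = 0 := by
      intro σ
      rw [tvCond_eq, condPlus_ising G hβ hlam₀, condPlus_ising G hβ hlam₀]
      simp [nbrCount_update G hij, h]
    simp [dobrushin, h0]
  · intro h
    refine sup'_le _ _ fun σ _ => ?_
    have hd := nbrCount_add G h σ
    rw [tvCond_eq, condPlus_ising G hβ hlam₀, condPlus_ising G hβ hlam₀]
    simp only [nbrCount_update G hij, h, true_and, if_true, reduceCtorEq, if_false, zero_add]
    refine (influence_le hβ hlam₀ _ _).trans ?_
    refine mul_le_mul_of_nonneg_left (zpow_le_max_of_mem hβ ?_ ?_) (by positivity) <;> omega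
end
end

section
/- For all real numbers a, b, x, η > 0, (1/(x+1))·a·log a + (x/(x+1))·b·log b − ((a+xb)/(x+1))·log((a+xb)/(x+1)) ≤ max(η, η⁻¹) · [ (1/(ηx+1))·a·log a + (ηx/(ηx+1))·b·log b − ((a+ηxb)/(ηx+1))·log((a+ηxb)/(ηx+1)) ]. -/
/-!
The proof is the Holley–Stroock perturbation argument. With the Bregman divergence
`φ(t, c) = t log t - t log c - t + c ≥ 0` of `t log t`, the entropy of `f` under a probability
measure `μ` equals the `μ`-average of `φ(f, c)` minus `φ(μ f, c)`, for every `c > 0`. Hence it is at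
most that average, with equality at `c = μ f`. Since `φ ≥ 0`, a density bound `μ ≤ M ν`
gives `Ent_μ f ≤ M Ent_ν f` by choosing `c = ν f` (`entropy_le_of_weights_le`). For the two
Bernoulli laws of the theorem, the density is bounded by `max η η⁻¹`.
-/

/-- Nonnegativity of the Bregman divergence of `t log t`. -/
lemma bregman_nonneg {t c : ℝ} (ht : 0 < t) (hc : 0 < c) :
    0 ≤ t * Real.log t - t * Real.log c - t + c := by
  have h := Real.log_le_sub_one_of_pos (div_pos hc ht)
  rw [Real.log_div hc.ne' ht.ne'] at h
  have h2 := mul_le_mul_of_nonneg_left h ht.le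
  have h3 : t * (c / t - 1) = c - t := by field_simp
  linarith

/-- Holley–Stroock comparison on two points: if the weights `(p, p')` are dominated by `M` times
the weights `(q, q')`, then so are the entropies. -/
lemma entropy_le_of_weights_le {a b p p' q q' M : ℝ} (ha : 0 < a) (hb : 0 < b)
    (hp : 0 < p) (hp' : 0 < p') (hq : 0 < q) (hq' : 0 < q')
    (hpp : p + p' = 1) (hqq : q + q' = 1) (h : p ≤ M * q) (h' : p' ≤ M * q') :
    p * (a * Real.log a) + p' * (b * Real.log b)
        - (p * a + p' * b) * Real.log (p * a + p' * b) ≤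
      M * (q * (a * Real.log a) + q' * (b * Real.log b)
        - (q * a + q' * b) * Real.log (q * a + q' * b)) := by
  have hm : 0 < p * a + p' * b := by positivity
  have hc : 0 < q * a + q' * b := by positivity
  have hmc := bregman_nonneg hm hc
  have h1 := mul_le_mul_of_nonneg_right h (bregman_nonneg ha hc)
  have h2 := mul_le_mul_of_nonneg_right h' (bregman_nonneg hb hc)
  obtain rfl : p' = 1 - p := by linarith
  obtain rfl : q' = 1 - q := by linarith
  generalize Real.log (p * a + (1 - p) * b) = Lm at *
  generalize Real.log (q * a + (1 - q) * b) = Lc at *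
  linarith

/-- Comparison of two-point entropies: for all positive `a, b, x, η`,
the entropy of the pair `(a,b)` under `Bernoulli(1/(x+1))` is at most
`max(η, η⁻¹)` times the entropy under `Bernoulli(1/(ηx+1))`. -/
theorem two_point_entropy_comparison (a b x η : ℝ)
    (ha : 0 < a) (hb : 0 < b) (hx : 0 < x) (hη : 0 < η) :
    (1 / (x + 1)) * (a * Real.log a) + (x / (x + 1)) * (b * Real.log b) -
        ((a + x * b) / (x + 1)) * Real.log ((a + x * b) / (x + 1)) ≤
      max η η⁻¹ *
        ((1 / (η * x + 1)) * (a * Real.log a) +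
          (η * x / (η * x + 1)) * (b * Real.log b) -
          ((a + η * x * b) / (η * x + 1)) *
            Real.log ((a + η * x * b) / (η * x + 1))) := by
  have hy : 0 < η * x := mul_pos hη hx
  have e1 : (a + x * b) / (x + 1) = 1 / (x + 1) * a + x / (x + 1) * b := by ring
  have e2 : (a + η * x * b) / (η * x + 1) =
      1 / (η * x + 1) * a + η * x / (η * x + 1) * b := by ring
  have hM : η ≤ max η η⁻¹ := le_max_left _ _
  have hM' : 1 ≤ max η η⁻¹ * η := by
    have := mul_le_mul_of_nonneg_right (le_max_right η η⁻¹) hη.le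
    rwa [inv_mul_cancel₀ hη.ne'] at this
  have hM1 : 1 ≤ max η η⁻¹ := by
    rcases le_total 1 η with h | h
    · exact h.trans hM
    · exact ((one_le_inv₀ hη).2 h).trans (le_max_right _ _)
  rw [e1, e2]
  refine entropy_le_of_weights_le ha hb (by positivity) (by positivity) (by positivity)
    (by positivity) (by field_simp; ring) (by field_simp; ring) ?_ ?_
  · rw [mul_one_div, div_le_div_iff₀ (by positivity) (by positivity)]
    nlinarith [mul_le_mul_of_nonneg_right hM hx.le]
  · rw [← mul_div_assoc, div_le_div_iff₀ (by positivity) (by positivity)]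
    nlinarith [mul_le_mul_of_nonneg_right hM' hx.le,
      mul_le_mul_of_nonneg_right hM1 (mul_pos hy hx).le]
end

section
/- Let V be a finite set with |V| = n ≥ 1, let μ and ν be probability distributions on 2^V with ν absolutely continuous with respect to μ, and let f = dν/dμ. For v ∈ V, let D_v denote marginalization onto the coordinates V∖{v}, i.e., (νD_v)(τ) = ν(τ) + ν(τ ∪ {v}) for τ ⊆ V∖{v}, and let P_v be the Markov transition matrix on 2^V that resamples the membership of v from the conditional distribution of μ given the configuration on V∖{v}. Then: (a) (1/n)·Σ_{v∈V} D(νD_v ‖ μD_v) = D(ν ‖ μ) − (1/n)·Σ_{v∈V} E_μ[Ent_v(f)]; and (b) if C > 0 satisfies D(ν ‖ μ) ≤ (1/C)·Σ_{v∈V} E_μ[Ent_v(f)], then (1/n)·Σ_{v∈V} D(νP_v ‖ μ) ≤ (1/n)·Σ_{v∈V} D(νD_v ‖ μD_v) ≤ (1 − C/n)·D(ν ‖ μ). -/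
/-!
Fix a site `v` and group the configurations into the pairs `{σ, σ ∪ {v}}` with `v ∉ σ`
(`sum_eq_sum_pair`). On such a pair write `a, b` for the `μ`-masses and `x, y` for the `ν`-masses.
The chain rule for the relative entropy on two points,
`x log (x/a) + y log (y/b) = (x+y) log ((x+y)/(a+b)) + (a+b) Ent_v(f)`,
summed over the pairs gives `D(νD_v ‖ μD_v) = D(ν ‖ μ) - E_μ[Ent_v f]` (`KLdiv_margAt`).
Averaging over `v` gives part (a), and with the entropy tensorization hypothesis the second
inequality of part (b). The first inequality of (b) is in fact an equality: `νP_v` and `μ` have the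
same conditional law of the membership of `v`, so only the marginals contribute
(`KLdiv_stepDist_siteUpdate`).
-/

open Finset

noncomputable section
attribute [local instance] Classical.propDecidable

/-- Push a distribution `ν` one step through a Markov transition matrix `P`. -/
def stepDist {Ω : Type*} [Fintype Ω] (ν : Ω → ℝ) (P : Ω → Ω → ℝ) : Ω → ℝ :=
  fun y => ∑ x, ν x * P x y

/-- KL divergence `D(ν‖μ) = Σ_x ν(x) log(ν(x)/μ(x))`. -/
def KLdiv {Ω : Type*} [Fintype Ω] (ν μ : Ω → ℝ) : ℝ :=
  ∑ x, ν x * Real.log (ν x / μ x)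

variable {V : Type*} [Fintype V] [DecidableEq V]

/-- Marginalization onto the coordinates `V ∖ {v}`: the pushforward of `ν` under
forgetting the membership of `v`, supported on sets not containing `v`. -/
def margAt (ν : Finset V → ℝ) (v : V) : Finset V → ℝ :=
  fun τ => if v ∈ τ then 0 else ν τ + ν (insert v τ)

/-- Glauber single-site update at `v`: resample the membership of `v` from the
conditional distribution of `μ` given the configuration on `V ∖ {v}`. -/
def siteUpdate (μ : Finset V → ℝ) (v : V) (σ τ : Finset V) : ℝ :=
  if τ.erase v = σ.erase v then
    μ τ / (μ (insert v (σ.erase v)) + μ (σ.erase v))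
  else 0

/-- `Ent_v(f)` evaluated at the configuration `τ` (only `τ ∖ {v}` matters): the
entropy functional of `f` with respect to the conditional distribution, under `μ`,
of the membership of `v` given the configuration on `V ∖ {v}`. -/
def entAt (μ : Finset V → ℝ) (f : Finset V → ℝ) (v : V) (τ : Finset V) : ℝ :=
  (μ (τ.erase v) / (μ (τ.erase v) + μ (insert v (τ.erase v))) *
      (f (τ.erase v) * Real.log (f (τ.erase v))) +
    μ (insert v (τ.erase v)) / (μ (τ.erase v) + μ (insert v (τ.erase v))) *
      (f (insert v (τ.erase v)) * Real.log (f (insert v (τ.erase v))))) -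
  (μ (τ.erase v) / (μ (τ.erase v) + μ (insert v (τ.erase v))) * f (τ.erase v) +
    μ (insert v (τ.erase v)) / (μ (τ.erase v) + μ (insert v (τ.erase v))) *
      f (insert v (τ.erase v))) *
    Real.log
      (μ (τ.erase v) / (μ (τ.erase v) + μ (insert v (τ.erase v))) * f (τ.erase v) +
        μ (insert v (τ.erase v)) / (μ (τ.erase v) + μ (insert v (τ.erase v))) *
          f (insert v (τ.erase v)))

/-- A sum over `2^V`, grouped into the pairs `{σ, insert v σ}` with `v ∉ σ`. -/
lemma sum_eq_sum_pair (v : V) (g : Finset V → ℝ) :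
    ∑ σ, g σ = ∑ σ, if v ∈ σ then 0 else g σ + g (insert v σ) := by
  have h1 : ∑ σ with v ∈ σ, g σ = ∑ σ with v ∉ σ, g (insert v σ) := by
    refine Finset.sum_bij' (fun σ _ => σ.erase v) (fun σ _ => insert v σ) ?_ ?_ ?_ ?_ ?_
    · intro σ _
      simp
    · intro σ _
      simp
    · intro σ hσ
      exact Finset.insert_erase (by simpa using hσ)
    · intro σ hσ
      exact Finset.erase_insert (by simpa using hσ)
    · intro σ hσ
      rw [Finset.insert_erase (by simpa using hσ)]
  rw [← Finset.sum_filter_add_sum_filter_not univ (fun σ : Finset V => v ∈ σ) g, h1, add_comm,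
    ← Finset.sum_add_distrib, Finset.sum_filter]
  refine Finset.sum_congr rfl fun σ _ => ?_
  by_cases h : v ∈ σ <;> simp [h]

/-- The chain rule for the relative entropy of the masses `x, y` with respect to `a, b` on two
points; the subtracted term is the total mass `a + b` times the conditional entropy of the density. -/
lemma pair_chain_rule {a b x y : ℝ} (ha : 0 ≤ a) (hb : 0 ≤ b)
    (hax : a = 0 → x = 0) (hby : b = 0 → y = 0) :
    (x + y) * Real.log ((x + y) / (a + b)) =
      (x * Real.log (x / a) + y * Real.log (y / b)) -
      (a + b) * ((a / (a + b) * (x / a * Real.log (x / a)) +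
        b / (a + b) * (y / b * Real.log (y / b))) -
        (a / (a + b) * (x / a) + b / (a + b) * (y / b)) *
          Real.log (a / (a + b) * (x / a) + b / (a + b) * (y / b))) := by
  rcases ha.eq_or_lt with rfl | ha'
  · obtain rfl := hax rfl
    rcases hb.eq_or_lt with rfl | hb'
    · obtain rfl := hby rfl
      simp
    · have := hb'.ne'
      simp only [zero_add, div_self this, zero_div, zero_mul, one_mul]
      field_simp
      ring
  · have hm : a + b ≠ 0 := by positivity
    have hA : a * (x / a) = x := mul_div_cancel₀ x ha'.ne'
    have hB : b * (y / b) = y := mul_div_cancel_of_imp' hby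
    have hs : a / (a + b) * (x / a) + b / (a + b) * (y / b) = (x + y) / (a + b) := by
      rw [div_mul_eq_mul_div, div_mul_eq_mul_div, hA, hB, add_div]
    rw [hs, mul_sub, mul_add, ← mul_assoc (a + b) (a / (a + b)), ← mul_assoc (a + b) (b / (a + b)),
      mul_div_cancel₀ a hm, mul_div_cancel₀ b hm, ← mul_assoc a, ← mul_assoc b, hA, hB,
      ← mul_assoc (a + b), mul_div_cancel₀ (x + y) hm]
    ring

/-- Resampling a two-point fibre of `μ`-masses `a, b` keeps only the relative entropy of the total
mass `s` of the fibre. -/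
lemma pair_resample {a b s : ℝ} (hs : a + b = 0 → s = 0) :
    s * (a / (b + a)) * Real.log (s * (a / (b + a)) / a) +
      s * (b / (b + a)) * Real.log (s * (b / (b + a)) / b) = s * Real.log (s / (a + b)) := by
  have key : ∀ c m : ℝ, s * (c / m) * Real.log (s * (c / m) / c) =
      s * (c / m) * Real.log (s / m) := by
    intro c m
    rcases eq_or_ne c 0 with rfl | hc
    · simp
    · congr 2
      field_simp
  rw [key, key, add_comm b a, ← add_mul, ← mul_add, ← add_div]
  rcases eq_or_ne (a + b) 0 with h | h
  · simp [hs h]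
  · rw [div_self h, mul_one]

lemma KLdiv_margAt_eq_sum (μ ν : Finset V → ℝ) (v : V) :
    KLdiv (margAt ν v) (margAt μ v) = ∑ σ, if v ∈ σ then 0 else
      (ν σ + ν (insert v σ)) * Real.log ((ν σ + ν (insert v σ)) / (μ σ + μ (insert v σ))) := by
  refine Finset.sum_congr rfl fun σ _ => ?_
  by_cases h : v ∈ σ <;> simp [margAt, h]

/-- The entropy chain rule at a single site. -/
lemma KLdiv_margAt (μ ν : Finset V → ℝ) (hμ₀ : ∀ σ, 0 ≤ μ σ)
    (habs : ∀ σ, μ σ = 0 → ν σ = 0) (v : V) :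
    KLdiv (margAt ν v) (margAt μ v) =
      KLdiv ν μ - ∑ τ : Finset V, μ τ * entAt μ (fun σ => ν σ / μ σ) v τ := by
  rw [KLdiv_margAt_eq_sum, KLdiv, sum_eq_sum_pair v (fun x => ν x * Real.log (ν x / μ x)),
    sum_eq_sum_pair v (fun τ => μ τ * entAt μ (fun σ => ν σ / μ σ) v τ),
    ← Finset.sum_sub_distrib]
  refine Finset.sum_congr rfl fun σ _ => ?_
  by_cases h : v ∈ σ
  · simp [h]
  · simp only [h, if_false]
    rw [pair_chain_rule (hμ₀ σ) (hμ₀ (insert v σ)) (habs σ) (habs _)]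
    simp only [entAt, Finset.erase_insert h, Finset.erase_eq_of_notMem h]
    ring

lemma stepDist_siteUpdate (μ ν : Finset V → ℝ) (v : V) (τ : Finset V) :
    stepDist ν (siteUpdate μ v) τ = (ν (τ.erase v) + ν (insert v (τ.erase v))) *
      (μ τ / (μ (insert v (τ.erase v)) + μ (τ.erase v))) := by
  rw [stepDist, sum_eq_sum_pair v, Finset.sum_eq_single (τ.erase v)]
  · simp [siteUpdate, add_mul]
  · intro σ _ hσ
    by_cases h : v ∈ σ
    · simp [h]
    · simp [siteUpdate, h, Finset.erase_insert h, hσ.symm]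
  · simp

lemma KLdiv_stepDist_siteUpdate (μ ν : Finset V → ℝ) (hμ₀ : ∀ σ, 0 ≤ μ σ)
    (habs : ∀ σ, μ σ = 0 → ν σ = 0) (v : V) :
    KLdiv (stepDist ν (siteUpdate μ v)) μ = KLdiv (margAt ν v) (margAt μ v) := by
  rw [KLdiv_margAt_eq_sum, KLdiv, sum_eq_sum_pair v]
  refine Finset.sum_congr rfl fun σ _ => ?_
  by_cases h : v ∈ σ
  · simp [h]
  · simp only [h, if_false, stepDist_siteUpdate, Finset.erase_insert h,
      Finset.erase_eq_of_notMem h]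
    refine pair_resample fun h0 => ?_
    have h1 := hμ₀ σ
    have h2 := hμ₀ (insert v σ)
    rw [habs σ (by linarith), habs (insert v σ) (by linarith), add_zero]

/-- Decomposition of the KL divergence along single-site
marginalizations, and the resulting one-step entropy contraction under approximate
tensorization of entropy. -/
theorem kl_marginal_decomposition [Nonempty V]
    (μ ν : Finset V → ℝ)
    (hμ₀ : ∀ σ, 0 ≤ μ σ) (hμ₁ : ∑ σ : Finset V, μ σ = 1)
    (hν₀ : ∀ σ, 0 ≤ ν σ) (hν₁ : ∑ σ : Finset V, ν σ = 1)
    (habs : ∀ σ, μ σ = 0 → ν σ = 0) :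
    ((1 / (Fintype.card V : ℝ)) *
        ∑ v : V, KLdiv (margAt ν v) (margAt μ v) =
      KLdiv ν μ -
        (1 / (Fintype.card V : ℝ)) *
          ∑ v : V, ∑ τ : Finset V, μ τ * entAt μ (fun σ => ν σ / μ σ) v τ) ∧
    (∀ C : ℝ, 0 < C →
      KLdiv ν μ ≤
        (1 / C) * ∑ v : V, ∑ τ : Finset V, μ τ * entAt μ (fun σ => ν σ / μ σ) v τ →
      (1 / (Fintype.card V : ℝ)) *
          ∑ v : V, KLdiv (stepDist ν (siteUpdate μ v)) μ ≤
        (1 / (Fintype.card V : ℝ)) *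
          ∑ v : V, KLdiv (margAt ν v) (margAt μ v) ∧
      (1 / (Fintype.card V : ℝ)) *
          ∑ v : V, KLdiv (margAt ν v) (margAt μ v) ≤
        (1 - C / (Fintype.card V : ℝ)) * KLdiv ν μ) := by
  have hn : (0 : ℝ) < Fintype.card V := by exact_mod_cast Fintype.card_pos
  have hA : (1 / (Fintype.card V : ℝ)) * ∑ v : V, KLdiv (margAt ν v) (margAt μ v) =
      KLdiv ν μ - (1 / (Fintype.card V : ℝ)) *
        ∑ v : V, ∑ τ : Finset V, μ τ * entAt μ (fun σ => ν σ / μ σ) v τ := by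
    simp only [KLdiv_margAt μ ν hμ₀ habs, Finset.sum_sub_distrib, Finset.sum_const,
      Finset.card_univ, nsmul_eq_mul]
    field_simp
  refine ⟨hA, fun C hC hE => ⟨?_, ?_⟩⟩
  · simp only [KLdiv_stepDist_siteUpdate μ ν hμ₀ habs, le_refl]
  · rw [hA]
    rw [one_div, inv_mul_eq_div, le_div_iff₀ hC] at hE
    have h := div_le_div_of_nonneg_right hE hn.le
    have e : KLdiv ν μ * C / (Fintype.card V : ℝ) = C / (Fintype.card V : ℝ) * KLdiv ν μ := by ring
    rw [e] at h
    rw [one_div, inv_mul_eq_div, sub_mul, one_mul]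
    linarith
end
end
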